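/- arXiv:2602.13468 — 3 statements merged into one kernel-verified Lean document; each statement's English description precedes it below -/
import Mathlib

section
/- Let p be a prime, r ≥ 1, and let G₁ and G₂ be two equivalent Reduced Internal Degree Matrices of size k × n over (ℤ/p^r)[D], i.e., both have full row rank, both have the same row span over the Laurent series ring (ℤ/p^r)((D)), and each has internal degree minimal among all polynomial generator matrices of that row span. Then the monic greatest common divisor in 𝔽_p[D] of the k × k minors of the reduction of G₁ modulo p equals the monic greatest common divisor in 𝔽_p[D] of the k × k minors of the reduction of G₂ modulo p; that is, Δ_p(G₁) = Δ_p(G₂). -/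
open Polynomial Matrix

/-- The natural ring homomorphism from polynomials over a commutative ring to Laurent series. -/
noncomputable def polyToLS (R : Type*) [CommRing R] : Polynomial R →+* LaurentSeries R :=
  (HahnSeries.ofPowerSeries ℤ R).comp Polynomial.coeToPowerSeries.ringHom

/-- The `k × k` minor of a `k × n` matrix determined by a choice of columns. -/
noncomputable def minorOn {R : Type*} [CommRing R] {k n : ℕ}
    (G : Matrix (Fin k) (Fin n) R) (c : Fin k → Fin n) : R :=
  (G.submatrix id c).det

/-- A polynomial matrix has full row rank if some maximal minor is a non-zero-divisor. -/
def FullRowRank {R : Type*} [CommRing R] {k n : ℕ}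
    (G : Matrix (Fin k) (Fin n) (Polynomial R)) : Prop :=
  ∃ c : Fin k → Fin n, minorOn G c ∈ nonZeroDivisors (Polynomial R)

/-- The free convolutional code (row span over the Laurent series ring) generated by `G`. -/
noncomputable def code {R : Type*} [CommRing R] {k n : ℕ}
    (G : Matrix (Fin k) (Fin n) (Polynomial R)) : Set (Fin n → LaurentSeries R) :=
  {v | ∃ u : Fin k → LaurentSeries R, v = Matrix.vecMul u (G.map (polyToLS R))}

/-- The internal degree of a polynomial matrix: the maximal degree of its maximal minors. -/
noncomputable def intdeg {R : Type*} [CommRing R] {k n : ℕ}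
    (G : Matrix (Fin k) (Fin n) (Polynomial R)) : WithBot ℕ :=
  Finset.univ.sup fun c : Fin k → Fin n => (minorOn G c).degree

/-- Coefficientwise/entrywise reduction modulo `p` of a matrix over `(ℤ/p^r)[D]`. -/
noncomputable def reduceMod (p r : ℕ) (hr : r ≠ 0) {k n : ℕ}
    (G : Matrix (Fin k) (Fin n) (Polynomial (ZMod (p ^ r)))) :
    Matrix (Fin k) (Fin n) (Polynomial (ZMod p)) :=
  G.map (Polynomial.map (ZMod.castHom (dvd_pow_self p hr) (ZMod p)))

/-- The monic greatest common divisor in `𝔽_p[D]` of the maximal minors of a matrix. -/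
noncomputable def gcdMinors {p : ℕ} [Fact p.Prime] {k n : ℕ}
    (G : Matrix (Fin k) (Fin n) (Polynomial (ZMod p))) : Polynomial (ZMod p) :=
  Finset.univ.gcd fun c : Fin k → Fin n => minorOn G c

/-- A vector of Laurent series has finite Hamming weight iff each component has
finitely many nonzero coefficients. -/
def FiniteWeight {R : Type*} [CommRing R] {m : ℕ} (v : Fin m → LaurentSeries R) : Prop :=
  ∀ i, (v i).support.Finite

/-- A polynomial generator matrix is non-catastrophic if every input whose output has finite
Hamming weight itself has finite Hamming weight. -/
noncomputable def NonCatastrophic {R : Type*} [CommRing R] {k n : ℕ}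
    (G : Matrix (Fin k) (Fin n) (Polynomial R)) : Prop :=
  ∀ u : Fin k → LaurentSeries R,
    FiniteWeight (Matrix.vecMul u (G.map (polyToLS R))) → FiniteWeight u

/-- The dual of a set of words: all vectors orthogonal to every word. -/
def dualCode {R : Type*} [CommRing R] {n : ℕ}
    (C : Set (Fin n → LaurentSeries R)) : Set (Fin n → LaurentSeries R) :=
  {v | ∀ w ∈ C, ∑ i, v i * w i = 0}



namespace RSP

/-- reduction mod p as a ring hom on polynomials -/
noncomputable def red (p r : ℕ) (hr : r ≠ 0) : (ZMod (p ^ r))[X] →+* (ZMod p)[X] :=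
  Polynomial.mapRingHom (ZMod.castHom (dvd_pow_self p hr) (ZMod p))

lemma red_surj (p r : ℕ) (hr : r ≠ 0) : Function.Surjective (red p r hr) :=
  Polynomial.map_surjective _ (ZMod.castHom_surjective _)

lemma cast_zero_dvd (p : ℕ) [Fact p.Prime] (r : ℕ) (hr : r ≠ 0) (a : ZMod (p ^ r))
    (h : ZMod.castHom (dvd_pow_self p hr) (ZMod p) a = 0) : (p : ZMod (p ^ r)) ∣ a := by
  obtain ⟨m, rfl⟩ := ZMod.intCast_surjective a
  rw [map_intCast, ZMod.intCast_zmod_eq_zero_iff_dvd] at h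
  obtain ⟨k, rfl⟩ := h
  exact ⟨k, by push_cast; rfl⟩

lemma red_zero (p : ℕ) [Fact p.Prime] (r : ℕ) (hr : r ≠ 0) (f : (ZMod (p ^ r))[X])
    (h : red p r hr f = 0) : ∃ g, f = (p : (ZMod (p ^ r))[X]) * g := by
  have : C (p : ZMod (p ^ r)) ∣ f := by
    rw [Polynomial.C_dvd_iff_dvd_coeff]
    intro i
    apply cast_zero_dvd p r hr
    have := congrArg (fun q => q.coeff i) h
    simpa [red] using this
  obtain ⟨g, hg⟩ := this
  exact ⟨g, by simpa using hg⟩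

lemma red_p (p r : ℕ) (hr : r ≠ 0) : red p r hr (p : (ZMod (p ^ r))[X]) = 0 := by
  rw [map_natCast]
  have : (p : (ZMod p)[X]) = C (p : ZMod p) := by simp
  rw [this]; simp

lemma ppow_zero (p r : ℕ) : (p : (ZMod (p ^ r))[X]) ^ r = 0 := by
  have := CharP.cast_eq_zero (ZMod (p ^ r))[X] (p ^ r)
  push_cast at this
  exact this

lemma red_of_pow_mul (p : ℕ) [Fact p.Prime] (r : ℕ) (hr : r ≠ 0) (j : ℕ) (hj : j < r)
    (f : (ZMod (p ^ r))[X])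
    (h : (p : (ZMod (p ^ r))[X]) ^ j * f = 0) : red p r hr f = 0 := by
  ext i
  have h2 : ((p : ZMod (p ^ r)) ^ j) * f.coeff i = 0 := by
    have := congrArg (fun q => q.coeff i) h
    have e : (p : (ZMod (p ^ r))[X]) ^ j = C ((p : ZMod (p ^ r)) ^ j) := by simp
    simp only [e, Polynomial.coeff_C_mul] at this
    simpa using this
  simp only [red, coe_mapRingHom, coeff_map, coeff_zero]
  obtain ⟨m, hm⟩ := ZMod.intCast_surjective (f.coeff i)
  rw [← hm] at h2 ⊢
  rw [map_intCast, ZMod.intCast_zmod_eq_zero_iff_dvd]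
  have h3 : (((p : ℤ) ^ j * m : ℤ) : ZMod (p ^ r)) = 0 := by push_cast; exact h2
  rw [ZMod.intCast_zmod_eq_zero_iff_dvd] at h3
  have hp0 : (p : ℤ) ≠ 0 := by exact_mod_cast (Fact.out : p.Prime).ne_zero
  have h4 : (p : ℤ) ^ j * p ∣ (p : ℤ) ^ j * m := by
    refine dvd_trans ?_ h3
    rw [← pow_succ]; push_cast
    exact pow_dvd_pow _ hj
  exact (mul_dvd_mul_iff_left (pow_ne_zero _ hp0)).1 h4

lemma monic_lift (p : ℕ) [Fact p.Prime] (r : ℕ) (hr : r ≠ 0) (f : (ZMod p)[X]) (hf : f.Monic) :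
    ∃ g : (ZMod (p ^ r))[X], red p r hr g = f ∧ g.degree = f.degree ∧ g.Monic := by
  have hl : f ∈ Polynomial.lifts (ZMod.castHom (dvd_pow_self p hr) (ZMod p)) := by
    obtain ⟨g, hg⟩ := red_surj p r hr f
    exact ⟨g, hg⟩
  obtain ⟨g, h1, h2, h3⟩ := Polynomial.lifts_and_degree_eq_and_monic hl hf
  exact ⟨g, h1, h2, h3⟩

lemma polyToLS_inj (R : Type*) [CommRing R] : Function.Injective (polyToLS R) := by
  intro a b h
  simp only [polyToLS, RingHom.comp_apply] at h
  have := HahnSeries.ofPowerSeries_injective h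
  exact Polynomial.coe_injective R (by simpa using this)

lemma isUnit_of_red (p : ℕ) [Fact p.Prime] (r : ℕ) (hr : r ≠ 0) (f : (ZMod (p ^ r))[X])
    (h : red p r hr f ≠ 0) : IsUnit (polyToLS (ZMod (p ^ r)) f) := by
  classical
  obtain ⟨g, hg⟩ := Polynomial.X_pow_dvd_iff.2
    (fun d (hd : d < (red p r hr f).natTrailingDegree) =>
      Polynomial.coeff_eq_zero_of_lt_natTrailingDegree hd)
  set m := (red p r hr f).natTrailingDegree with hm
  obtain ⟨g', hg'⟩ := red_surj p r hr g
  obtain ⟨x, hx⟩ := red_zero p r hr (f - X ^ m * g') (by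
    rw [map_sub, map_mul, map_pow, hg']
    have : red p r hr X = X := by simp [red]
    rw [this, ← hg, sub_self])
  have hf : f = X ^ m * g' + (p : (ZMod (p ^ r))[X]) * x := by rw [← hx]; ring
  have hc : IsUnit (g'.coeff 0) := by
    have h1 : g.coeff 0 ≠ 0 := by
      have h2 : (red p r hr f).coeff m ≠ 0 := by
        have := Polynomial.trailingCoeff_nonzero_iff_nonzero.2 h
        simpa [Polynomial.trailingCoeff, hm] using this
      rw [hg, Polynomial.coeff_X_pow_mul'] at h2
      simpa using h2
    have h3 : ZMod.castHom (dvd_pow_self p hr) (ZMod p) (g'.coeff 0) = g.coeff 0 := by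
      rw [← hg']; simp [red]
    rw [← h3] at h1
    obtain ⟨m, hm⟩ := ZMod.intCast_surjective (g'.coeff 0)
    rw [← hm] at h1 ⊢
    rw [map_intCast, Ne, ZMod.intCast_zmod_eq_zero_iff_dvd] at h1
    have hcop : IsCoprime m ((p : ℤ) ^ r) := by
      apply IsCoprime.pow_right
      exact ((Nat.prime_iff_prime_int.1 (Fact.out : p.Prime)).coprime_iff_not_dvd.2 h1).symm
    obtain ⟨a, b, hab⟩ := hcop
    apply IsUnit.of_mul_eq_one (a : ZMod (p ^ r))
    have := congrArg (fun z : ℤ => (z : ZMod (p ^ r))) hab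
    have e0 : ((p : ZMod (p ^ r)) ^ r) = 0 := by
      have := ZMod.natCast_self (p ^ r); push_cast at this; exact this
    push_cast at this
    rw [e0, mul_zero, add_zero] at this
    rw [mul_comm]; exact this
  have hu1 : IsUnit (polyToLS (ZMod (p ^ r)) g') := by
    simp only [polyToLS, RingHom.comp_apply]
    apply IsUnit.map
    rw [PowerSeries.isUnit_iff_constantCoeff]
    simpa using hc
  have hu2 : IsUnit (polyToLS (ZMod (p ^ r)) X) := by
    have : polyToLS (ZMod (p ^ r)) X = HahnSeries.single (1 : ℤ) 1 := by
      simp [polyToLS]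
    rw [this]
    apply IsUnit.of_mul_eq_one (HahnSeries.single (-1 : ℤ) 1)
    simp
  have hn : IsNilpotent (polyToLS (ZMod (p ^ r)) ((p : (ZMod (p ^ r))[X]) * x)) := by
    refine ⟨r, ?_⟩
    rw [← map_pow, mul_pow, ppow_zero, zero_mul, map_zero]
  rw [hf, map_add]
  apply IsNilpotent.isUnit_add_left_of_commute hn _ (Commute.all _ _)
  rw [map_mul, map_pow]
  exact (hu2.pow m).mul hu1

lemma nzd_iff (p : ℕ) [Fact p.Prime] (r : ℕ) (hr : r ≠ 0) (f : (ZMod (p ^ r))[X]) :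
    f ∈ nonZeroDivisors (ZMod (p ^ r))[X] ↔ red p r hr f ≠ 0 := by
  constructor
  · intro h h0
    obtain ⟨g, hg⟩ := red_zero p r hr f h0
    have h1 : (p : (ZMod (p ^ r))[X]) ^ (r - 1) * f = 0 := by
      rw [hg, ← mul_assoc, ← pow_succ, Nat.sub_add_cancel (Nat.pos_of_ne_zero hr), ppow_zero,
        zero_mul]
    have h2 := (mem_nonZeroDivisors_iff_right.1 h) _ h1
    have := red_of_pow_mul p r hr (r - 1) (by omega) 1 (by rw [h2, zero_mul])
    rw [map_one] at this
    exact one_ne_zero this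
  · intro h
    have hu := isUnit_of_red p r hr f h
    rw [mem_nonZeroDivisors_iff_right]
    intro x hx
    apply polyToLS_inj
    rw [map_zero]
    have := congrArg (polyToLS (ZMod (p ^ r))) hx
    rw [map_mul, map_zero] at this
    exact hu.mul_left_eq_zero.1 this

section rankone
variable {ι : Type*} (p : ℕ) [Fact p.Prime] (r : ℕ) (hr : r ≠ 0)

/-- generator at level j, normalised relative to a given element z -/
lemma exists_gen (L : Submodule (ZMod (p ^ r))[X] (ι → (ZMod (p ^ r))[X]))
    (y : ι → (ZMod (p ^ r))[X]) (c : ι) (hyc : red p r hr (y c) ≠ 0)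
    (hrk : ∀ x ∈ L, ∀ i, x i * y c = x c * y i)
    (j : ℕ) (hj : j < r) (z : ι → (ZMod (p ^ r))[X])
    (hz : (p : (ZMod (p ^ r))[X]) ^ j • z ∈ L) (hz0 : red p r hr (z c) ≠ 0) :
    ∃ ζ : ι → (ZMod (p ^ r))[X], (p : (ZMod (p ^ r))[X]) ^ j • ζ ∈ L ∧
      red p r hr (ζ c) ≠ 0 ∧
      (∃ q : (ZMod (p ^ r))[X], q.Monic ∧ ∃ x : ι → (ZMod (p ^ r))[X],
        z = q • ζ + (p : (ZMod (p ^ r))[X]) • x) ∧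
      ∀ w : ι → (ZMod (p ^ r))[X], (p : (ZMod (p ^ r))[X]) ^ j • w ∈ L →
        ∃ q : (ZMod (p ^ r))[X], ∃ x : ι → (ZMod (p ^ r))[X],
          w = q • ζ + (p : (ZMod (p ^ r))[X]) • x := by
  classical
  have key : ∀ w : ι → (ZMod (p ^ r))[X], (p : (ZMod (p ^ r))[X]) ^ j • w ∈ L →
      red p r hr (w c) = 0 → ∃ x : ι → (ZMod (p ^ r))[X],
        w = (p : (ZMod (p ^ r))[X]) • x := by
    intro w hw h0
    have : ∀ i, ∃ g, w i = (p : (ZMod (p ^ r))[X]) * g := by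
      intro i
      apply red_zero p r hr
      have h1 := hrk _ hw i
      simp only [Pi.smul_apply, smul_eq_mul] at h1
      have h2 : red p r hr (w i * y c - w c * y i) = 0 := by
        apply red_of_pow_mul p r hr j hj
        linear_combination h1
      rw [map_sub, map_mul, map_mul, h0, zero_mul, sub_zero] at h2
      exact (mul_eq_zero.1 h2).resolve_right hyc
    choose x hx using this
    exact ⟨x, funext fun i => by simp [hx i]⟩
  let I : Ideal (ZMod p)[X] :=
    { carrier := {f | ∃ w : ι → (ZMod (p ^ r))[X], (p : (ZMod (p ^ r))[X]) ^ j • w ∈ L ∧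
        red p r hr (w c) = f}
      add_mem' := by
        rintro _ _ ⟨w, hw, rfl⟩ ⟨v, hv, rfl⟩
        exact ⟨w + v, by rw [smul_add]; exact L.add_mem hw hv, by simp⟩
      zero_mem' := ⟨0, by simp, by simp⟩
      smul_mem' := by
        rintro a _ ⟨w, hw, rfl⟩
        obtain ⟨b, rfl⟩ := red_surj p r hr a
        refine ⟨b • w, ?_, by simp⟩
        rw [smul_comm]; exact L.smul_mem _ hw }
  have hI : I.IsPrincipal := inferInstance
  obtain ⟨g, hg⟩ := hI.principal
  have hzI : red p r hr (z c) ∈ I := ⟨z, hz, rfl⟩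
  rw [hg] at hzI
  obtain ⟨e, he⟩ := Ideal.mem_span_singleton'.1 hzI
  have he0 : e ≠ 0 := by rintro rfl; apply hz0; rw [← he, zero_mul]
  have hl0 : e.leadingCoeff ≠ 0 := Polynomial.leadingCoeff_ne_zero.2 he0
  have hg' : C e.leadingCoeff * g ∈ I := by
    apply I.mul_mem_left; rw [hg]; exact Ideal.mem_span_singleton_self g
  obtain ⟨ζ, hζ, hζc⟩ := hg'
  have hCC : C (e.leadingCoeff⁻¹) * C e.leadingCoeff = 1 := by
    rw [← C_mul, inv_mul_cancel₀ hl0, C_1]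
  have hdiv : ∀ w : ι → (ZMod (p ^ r))[X], (p : (ZMod (p ^ r))[X]) ^ j • w ∈ L →
      ∀ q : (ZMod (p ^ r))[X], red p r hr (w c) = red p r hr q * red p r hr (ζ c) →
      ∃ x : ι → (ZMod (p ^ r))[X], w = q • ζ + (p : (ZMod (p ^ r))[X]) • x := by
    intro w hw q hq
    obtain ⟨x, hx⟩ := key (w - q • ζ) (by
      rw [smul_sub, smul_comm _ q]
      exact L.sub_mem hw (L.smul_mem _ hζ)) (by simp [hq])
    exact ⟨x, by rw [← hx]; abel⟩
  refine ⟨ζ, hζ, ?_, ?_, ?_⟩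
  · rw [hζc]
    intro h
    apply hz0
    rw [← he]
    rcases mul_eq_zero.1 h with h | h
    · exact absurd (C_eq_zero.1 h) hl0
    · rw [h, mul_zero]
  · obtain ⟨q, hq1, -, hq3⟩ := monic_lift p r hr (e * C e.leadingCoeff⁻¹)
      (Polynomial.monic_mul_leadingCoeff_inv he0)
    refine ⟨q, hq3, hdiv z hz q ?_⟩
    rw [hq1, hζc, ← he]
    linear_combination (-(e * g)) * hCC
  · intro w hw
    have hwI : red p r hr (w c) ∈ I := ⟨w, hw, rfl⟩
    rw [hg] at hwI
    obtain ⟨a, ha⟩ := Ideal.mem_span_singleton'.1 hwI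
    obtain ⟨q, hq⟩ := red_surj p r hr (a * C e.leadingCoeff⁻¹)
    refine ⟨q, hdiv w hw q ?_⟩
    rw [hq, hζc, ← ha]
    linear_combination (-(a * g)) * hCC

/-- Main degree reduction -/
lemma claimB (L : Submodule (ZMod (p ^ r))[X] (ι → (ZMod (p ^ r))[X]))
    (y₀ : ι → (ZMod (p ^ r))[X]) (c : ι) (hyc : red p r hr (y₀ c) ≠ 0)
    (hrk : ∀ x ∈ L, ∀ i, x i * y₀ c = x c * y₀ i) (D : WithBot ℕ) (m : ℕ) :
    ∀ (j : ℕ) (_ : r ≤ j + m) (y z x : ι → (ZMod (p ^ r))[X]) (π : (ZMod (p ^ r))[X]),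
    π.Monic → (p : (ZMod (p ^ r))[X]) ^ j • y ∈ L → (p : (ZMod (p ^ r))[X]) ^ j • z ∈ L →
    red p r hr (z c) ≠ 0 →
    y = π • z + (p : (ZMod (p ^ r))[X]) • x →
    (∀ i, ((p : (ZMod (p ^ r))[X]) ^ j * y i).degree ≤ D) →
    ∃ a : ι → (ZMod (p ^ r))[X], (p : (ZMod (p ^ r))[X]) ^ (j + 1) • a ∈ L ∧
      ∀ i, (π * ((p : (ZMod (p ^ r))[X]) ^ j * (z i - p * a i))).degree ≤ D := by
  have hR : Nontrivial (ZMod (p ^ r)) := by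
    have : Fact (1 < p ^ r) := ⟨Nat.one_lt_pow hr (Fact.out : p.Prime).one_lt⟩
    infer_instance
  have hpz : ∀ j, r ≤ j → (p : (ZMod (p ^ r))[X]) ^ j = 0 := fun j hj => by
    obtain ⟨k, rfl⟩ := Nat.exists_eq_add_of_le hj
    rw [pow_add, ppow_zero, zero_mul]
  induction m with
  | zero =>
    intro j hj y z x π _ _ _ _ _ _
    refine ⟨0, by simp, fun i => ?_⟩
    rw [hpz j (by omega)]; simp
  | succ m ih =>
    intro j hj y z x π hπ hy hz hz0 hyz hD
    have E : ∀ (t : ℕ) (j' : ℕ), j < j' → r ≤ j' + t → ∀ w : ι → (ZMod (p ^ r))[X],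
        (p : (ZMod (p ^ r))[X]) ^ j' • w ∈ L → ∃ a : ι → (ZMod (p ^ r))[X],
        (p : (ZMod (p ^ r))[X]) ^ j' • a ∈ L ∧
        ∀ i, ((p : (ZMod (p ^ r))[X]) ^ j' * (w i - π * a i)).degree ≤ D := by
      intro t
      induction t with
      | zero =>
        intro j' _ h w _
        refine ⟨0, by simp, fun i => ?_⟩
        rw [hpz j' (by omega)]; simp
      | succ t iht =>
        intro j' hjj' h w hw
        by_cases hjr : r ≤ j'
        · refine ⟨0, by simp, fun i => ?_⟩
          rw [hpz j' hjr]; simp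
        push Not at hjr
        obtain ⟨e, rfl⟩ := Nat.exists_eq_add_of_lt hjj'
        have hup : ∀ v : ι → (ZMod (p ^ r))[X], (p : (ZMod (p ^ r))[X]) ^ j • v ∈ L →
            (p : (ZMod (p ^ r))[X]) ^ (j + e + 1) • v ∈ L := by
          intro v hv
          have : (p : (ZMod (p ^ r))[X]) ^ (j + e + 1) • v =
            (p : (ZMod (p ^ r))[X]) ^ (e + 1) • (p : (ZMod (p ^ r))[X]) ^ j • v := by
            rw [smul_smul, ← pow_add]; congr 2; omega
          rw [this]; exact L.smul_mem _ hv
        obtain ⟨ζ, hζ, hζ0, ⟨q, hq, x1, hx1⟩, hgen⟩ :=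
          exists_gen p r hr L y₀ c hyc hrk (j + e + 1) hjr z (hup z hz) hz0
        obtain ⟨b, hb, hbD⟩ := ih (j + e + 1) (by omega) y ζ (π • x1 + x) (π * q) (hπ.mul hq)
          (hup y hy) hζ hζ0 (by
            rw [hyz, hx1]; simp only [smul_add, smul_smul]
            rw [mul_comm π (p : (ZMod (p ^ r))[X])]; abel) (fun i => by
            have : (p : (ZMod (p ^ r))[X]) ^ (j + e + 1) * y i =
              (((p : ZMod (p ^ r)) ^ (e + 1))) • ((p : (ZMod (p ^ r))[X]) ^ j * y i) := by
              rw [Polynomial.smul_eq_C_mul]; simp; ring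
            rw [this]
            exact (Polynomial.degree_smul_le _ _).trans (hD i))
        obtain ⟨f, x2, hx2⟩ := hgen w hw
        have hmem : (p : (ZMod (p ^ r))[X]) ^ (j + e + 1 + 1) • (x2 + f • b) ∈ L := by
          have : (p : (ZMod (p ^ r))[X]) ^ (j + e + 1 + 1) • (x2 + f • b) =
            (p : (ZMod (p ^ r))[X]) ^ (j + e + 1) • w
              - f • ((p : (ZMod (p ^ r))[X]) ^ (j + e + 1) • ζ)
              + f • (p : (ZMod (p ^ r))[X]) ^ (j + e + 1 + 1) • b := by
            rw [hx2]; ext1 i; simp; ring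
          rw [this]
          exact L.add_mem (L.sub_mem hw (L.smul_mem _ hζ)) (L.smul_mem _ hb)
        obtain ⟨a, ha, haD⟩ := iht (j + e + 1 + 1) (by omega) (by omega) _ hmem
        refine ⟨(f /ₘ π) • (ζ - (p : (ZMod (p ^ r))[X]) • b) + (p : (ZMod (p ^ r))[X]) • a,
          ?_, ?_⟩
        · have : (p : (ZMod (p ^ r))[X]) ^ (j + e + 1) •
            ((f /ₘ π) • (ζ - (p : (ZMod (p ^ r))[X]) • b) + (p : (ZMod (p ^ r))[X]) • a) =
            (f /ₘ π) • ((p : (ZMod (p ^ r))[X]) ^ (j + e + 1) • ζ)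
            - (f /ₘ π) • ((p : (ZMod (p ^ r))[X]) ^ (j + e + 1 + 1) • b)
            + (p : (ZMod (p ^ r))[X]) ^ (j + e + 1 + 1) • a := by
            ext1 i; simp; ring
          rw [this]
          exact L.add_mem (L.sub_mem (L.smul_mem _ hζ) (L.smul_mem _ hb)) ha
        · intro i
          have hf := Polynomial.modByMonic_add_div f π
          have : (p : (ZMod (p ^ r))[X]) ^ (j + e + 1) * (w i - π *
            ((f /ₘ π) • (ζ - (p : (ZMod (p ^ r))[X]) • b) + (p : (ZMod (p ^ r))[X]) • a) i) =
            (f %ₘ π) * ((p : (ZMod (p ^ r))[X]) ^ (j + e + 1) * (ζ i - p * b i)) +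
            (p : (ZMod (p ^ r))[X]) ^ (j + e + 1 + 1) * ((x2 + f • b) i - π * a i) := by
            rw [hx2]; simp
            linear_combination (-(p : (ZMod (p ^ r))[X]) ^ (j + e + 1) * (ζ i - p * b i)) * hf
          rw [this]
          refine (Polynomial.degree_add_le _ _).trans (max_le ?_ (haD i))
          refine le_trans ?_ (hbD i)
          set u := (p : (ZMod (p ^ r))[X]) ^ (j + e + 1) * (ζ i - p * b i)
          rw [(hπ.mul hq).degree_mul_comm, (hπ.mul hq).degree_mul, hq.degree_mul, add_comm]
          refine (Polynomial.degree_mul_le _ _).trans ?_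
          gcongr
          refine (Polynomial.degree_modByMonic_lt f hπ).le.trans ?_
          have : (0 : WithBot ℕ) ≤ q.degree := Polynomial.zero_le_degree_iff.2 hq.ne_zero
          calc π.degree = π.degree + 0 := (add_zero _).symm
            _ ≤ π.degree + q.degree := by gcongr
    obtain ⟨a, ha, haD⟩ := E r (j + 1) (by omega) (by omega) (-x) (by
      have : (p : (ZMod (p ^ r))[X]) ^ (j + 1) • (-x) =
        π • ((p : (ZMod (p ^ r))[X]) ^ j • z) - (p : (ZMod (p ^ r))[X]) ^ j • y := by
        rw [hyz]; ext1 i; simp; ring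
      rw [this]
      exact L.sub_mem (L.smul_mem _ hz) hy)
    refine ⟨a, ha, fun i => ?_⟩
    have : π * ((p : (ZMod (p ^ r))[X]) ^ j * (z i - p * a i)) =
      (p : (ZMod (p ^ r))[X]) ^ j * y i +
      (p : (ZMod (p ^ r))[X]) ^ (j + 1) * ((-x) i - π * a i) := by
      rw [hyz]; simp; ring
    rw [this]
    exact (Polynomial.degree_add_le _ _).trans (max_le (hD i) (haD i))

end rankone

section codes
variable {k n : ℕ}

/-- polynomial codewords -/
noncomputable def polyMod {R : Type*} [CommRing R] (G : Matrix (Fin k) (Fin n) R[X]) :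
    Submodule R[X] (Fin n → R[X]) where
  carrier := {v | (fun i => polyToLS R (v i)) ∈ code G}
  add_mem' := by
    rintro a b ⟨u, hu⟩ ⟨v, hv⟩
    refine ⟨u + v, ?_⟩
    rw [Matrix.add_vecMul, ← hu, ← hv]
    ext1 i; simp
  zero_mem' := ⟨0, by ext1 i; simp⟩
  smul_mem' := by
    rintro c v ⟨u, hu⟩
    refine ⟨polyToLS R c • u, ?_⟩
    rw [Matrix.smul_vecMul, ← hu]
    ext1 i; simp

lemma row_mem {R : Type*} [CommRing R] (G : Matrix (Fin k) (Fin n) R[X]) (i : Fin k) :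
    G i ∈ polyMod G := by
  refine ⟨Pi.single i 1, ?_⟩
  rw [Matrix.single_one_vecMul]; rfl

/-- transition matrix -/
lemma exists_T {R : Type*} [CommRing R] (G G' : Matrix (Fin k) (Fin n) R[X])
    (h : ∀ i, G' i ∈ polyMod G) :
    ∃ T : Matrix (Fin k) (Fin k) (LaurentSeries R),
      G'.map (polyToLS R) = T * G.map (polyToLS R) := by
  choose T hT using h
  refine ⟨Matrix.of T, ?_⟩
  ext1 i j
  have := congrFun (hT i) j
  rw [Matrix.map_apply]
  exact this

lemma minor_map {R S : Type*} [CommRing R] [CommRing S] (f : R →+* S)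
    (G : Matrix (Fin k) (Fin n) R) (c : Fin k → Fin n) :
    minorOn (G.map f) c = f (minorOn G c) := by
  unfold minorOn
  rw [RingHom.map_det]; rfl

lemma minor_mul {R : Type*} [CommRing R] (T : Matrix (Fin k) (Fin k) R)
    (G : Matrix (Fin k) (Fin n) R) (c : Fin k → Fin n) :
    minorOn (T * G) c = T.det * minorOn G c := by
  unfold minorOn
  rw [← Matrix.det_mul]; rfl

lemma minor_rel {R : Type*} [CommRing R] (G G' : Matrix (Fin k) (Fin n) R[X])
    (h : ∀ i, G' i ∈ polyMod G) (c d : Fin k → Fin n) :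
    minorOn G' c * minorOn G d = minorOn G' d * minorOn G c := by
  obtain ⟨T, hT⟩ := exists_T G G' h
  have : ∀ c, polyToLS R (minorOn G' c) = T.det * polyToLS R (minorOn G c) := by
    intro c
    rw [← minor_map, ← minor_map, hT, minor_mul]
  apply polyToLS_inj
  rw [map_mul, map_mul, this, this]; ring

lemma code_eq (p : ℕ) [Fact p.Prime] (r : ℕ) (hr : r ≠ 0) (G G' : Matrix (Fin k) (Fin n) (ZMod (p ^ r))[X])
    (h : ∀ i, G' i ∈ polyMod G) (hG' : FullRowRank G') : code G' = code G := by
  obtain ⟨T, hT⟩ := exists_T G G' h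
  obtain ⟨c, hc⟩ := hG'
  have hu := isUnit_of_red p r hr _ ((nzd_iff p r hr _).1 hc)
  rw [← minor_map, hT, minor_mul] at hu
  have hTu : IsUnit T.det := isUnit_of_mul_isUnit_left hu
  ext v
  constructor
  · rintro ⟨u, rfl⟩
    exact ⟨u ᵥ* T, by rw [hT, Matrix.vecMul_vecMul]⟩
  · rintro ⟨u, rfl⟩
    refine ⟨u ᵥ* T⁻¹, ?_⟩
    rw [hT, Matrix.vecMul_vecMul, ← Matrix.mul_assoc, Matrix.nonsing_inv_mul _ hTu,
      Matrix.one_mul]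

lemma cramer_mem (p r : ℕ) (G : Matrix (Fin k) (Fin n) (ZMod (p ^ r))[X]) (c : Fin k → Fin n)
    (v : Fin n → (ZMod (p ^ r))[X]) (hv : v ∈ polyMod G) :
    ∃ a : Fin k → (ZMod (p ^ r))[X], minorOn G c • v = a ᵥ* G := by
  obtain ⟨u, hu⟩ := hv
  set f := polyToLS (ZMod (p ^ r))
  refine ⟨(fun i => v (c i)) ᵥ* (G.submatrix id c).adjugate, ?_⟩
  have h1 : (fun i => f (v (c i))) = u ᵥ* ((G.submatrix id c).map f) := by
    ext1 i
    exact congrFun hu (c i)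
  have hmapv : ∀ {m l : ℕ} (w : Fin m → (ZMod (p ^ r))[X])
      (A : Matrix (Fin m) (Fin l) (ZMod (p ^ r))[X]) (i : Fin l),
      f ((w ᵥ* A) i) = ((fun j => f (w j)) ᵥ* A.map f) i := by
    intro m l w A i
    exact RingHom.map_vecMul f A w i
  ext1 i
  apply polyToLS_inj
  change f _ = f _
  rw [hmapv]
  have h2 : (fun j => f (((fun i => v (c i)) ᵥ* (G.submatrix id c).adjugate) j)) =
      f (minorOn G c) • u := by
    ext1 j
    rw [hmapv, h1, Matrix.vecMul_vecMul]
    have : (G.submatrix id c).map f * (G.submatrix id c).adjugate.map f =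
        f (minorOn G c) • (1 : Matrix (Fin k) (Fin k) _) := by
      rw [← Matrix.map_mul, Matrix.mul_adjugate]
      ext1 a b
      by_cases hab : a = b
      · subst hab; simp [minorOn]
      · simp [hab]
    rw [this, Matrix.vecMul_smul, Matrix.vecMul_one]
  rw [h2, Matrix.smul_vecMul]
  have := congrFun hu i
  simp only [Pi.smul_apply, smul_eq_mul, map_mul]
  rw [← this]

/-- replace row `j`, take all minors -/
noncomputable def phi {R : Type*} [CommRing R] (G : Matrix (Fin k) (Fin n) R) (j : Fin k) :
    (Fin n → R) →ₗ[R] ((Fin k → Fin n) → R) where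
  toFun x := fun c => minorOn (G.updateRow j x) c
  map_add' x y := by
    ext1 c
    have e : ∀ x, (G.updateRow j x).submatrix id c =
        (G.submatrix id c).updateRow j (fun i => x (c i)) := by
      intro x; ext a b; simp [Matrix.updateRow_apply]
    simp only [minorOn, e, Pi.add_apply]
    exact Matrix.det_updateRow_add _ _ _ _
  map_smul' s x := by
    ext1 c
    have e : ∀ x, (G.updateRow j x).submatrix id c =
        (G.submatrix id c).updateRow j (fun i => x (c i)) := by
      intro x; ext a b; simp [Matrix.updateRow_apply]
    simp only [minorOn, e, Pi.smul_apply, RingHom.id_apply]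
    exact Matrix.det_updateRow_smul _ _ _ _

lemma phi_self {R : Type*} [CommRing R] (G : Matrix (Fin k) (Fin n) R) (j : Fin k) :
    phi G j (G j) = minorOn G := by
  ext1 c
  simp [phi, Matrix.updateRow_eq_self]

lemma phi_other {R : Type*} [CommRing R] (G : Matrix (Fin k) (Fin n) R) (i j : Fin k)
    (h : i ≠ j) : phi G j (G i) = 0 := by
  ext1 c
  simp only [phi, LinearMap.coe_mk, AddHom.coe_mk, minorOn, Pi.zero_apply]
  apply Matrix.det_zero_of_row_eq h
  ext b
  simp [Matrix.updateRow_apply, h]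

lemma phi_vecMul {R : Type*} [CommRing R] (G : Matrix (Fin k) (Fin n) R) (j : Fin k)
    (a : Fin k → R) : phi G j (a ᵥ* G) = a j • minorOn G := by
  rw [Matrix.vecMul_eq_sum, map_sum, Finset.sum_eq_single j]
  · rw [map_smul]; congr 1; exact phi_self G j
  · intro b _ hb
    rw [map_smul]
    have := phi_other G b j hb
    rw [this, smul_zero]
  · simp

/-- saturation step -/
lemma sat_step (p : ℕ) [Fact p.Prime] (r : ℕ) (hr : r ≠ 0) (G : Matrix (Fin k) (Fin n) (ZMod (p ^ r))[X]) (hG : FullRowRank G)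
    (hmin : ∀ G' : Matrix (Fin k) (Fin n) (Polynomial (ZMod (p ^ r))),
      FullRowRank G' → code G' = code G → intdeg G ≤ intdeg G')
    (j : Fin k) (h : Fin n → (ZMod (p ^ r))[X]) (hh : h ∈ polyMod G)
    (π : (ZMod (p ^ r))[X]) (hπ : π.Monic) (hπ0 : 0 < π.degree)
    (a : Fin k → (ZMod (p ^ r))[X]) (haj : a j = 1) (x : Fin n → (ZMod (p ^ r))[X])
    (hx : a ᵥ* G = π • h + (p : (ZMod (p ^ r))[X]) • x) : False := by
  obtain ⟨c, hc⟩ := hG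
  have hyc := (nzd_iff p r hr _).1 hc
  have hrows : ∀ v ∈ polyMod G, ∀ i, (G.updateRow j v) i ∈ polyMod G := by
    intro v hv i
    by_cases hij : i = j
    · subst hij; rw [Matrix.updateRow_self]; exact hv
    · rw [Matrix.updateRow_ne hij]; exact row_mem G i
  have hy : minorOn G = π • phi G j h + (p : (ZMod (p ^ r))[X]) • phi G j x := by
    rw [← map_smul, ← map_smul, ← map_add, ← hx, phi_vecMul, haj, one_smul]
  have hz0 : red p r hr (phi G j h c) ≠ 0 := by
    intro h0
    apply hyc
    rw [hy]
    simp only [Pi.add_apply, Pi.smul_apply, smul_eq_mul, map_add, map_mul, h0, red_p]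
    simp
  obtain ⟨b, hb, hbD⟩ := claimB p r hr ((polyMod G).map (phi G j)) (minorOn G) c hyc (by
      rintro _ ⟨v, hv, rfl⟩ i
      exact minor_rel G (G.updateRow j v) (hrows v hv) i c) (intdeg G) r 0 (by omega)
      (minorOn G) (phi G j h) (phi G j x) π hπ
      (by rw [pow_zero, one_smul]; exact ⟨G j, row_mem G j, phi_self G j⟩)
      (by rw [pow_zero, one_smul]; exact ⟨h, hh, rfl⟩) hz0 hy
      (by
        intro i; rw [pow_zero, one_mul]
        exact Finset.le_sup (f := fun c : Fin k → Fin n => (minorOn G c).degree)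
          (Finset.mem_univ i))
  rw [zero_add, pow_one] at hb
  obtain ⟨v, hv, hvb⟩ := hb
  have hG' : ∀ d, minorOn (G.updateRow j (h - v)) d = phi G j h d - p * b d := by
    intro d
    have : phi G j (h - v) d = phi G j h d - p * b d := by
      rw [map_sub, hvb]; simp
    exact this
  have hmem : h - v ∈ polyMod G := (polyMod G).sub_mem hh hv
  have hred : red p r hr (minorOn (G.updateRow j (h - v)) c) ≠ 0 := by
    rw [hG', map_sub, map_mul, red_p, zero_mul, sub_zero]; exact hz0
  have hfr : FullRowRank (G.updateRow j (h - v)) := ⟨c, (nzd_iff p r hr _).2 hred⟩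
  have hle := hmin _ hfr (code_eq p r hr G _ (hrows _ hmem) hfr)
  obtain ⟨d, -, hd⟩ := Finset.exists_mem_eq_sup (Finset.univ : Finset (Fin k → Fin n))
    ⟨c, Finset.mem_univ c⟩ (fun d => (minorOn (G.updateRow j (h - v)) d).degree)
  have hdeg : intdeg (G.updateRow j (h - v)) = (minorOn (G.updateRow j (h - v)) d).degree := hd
  have hb' := hbD d
  rw [pow_zero, one_mul, ← hG', hπ.degree_mul_comm, hπ.degree_mul] at hb'
  have hne : (minorOn (G.updateRow j (h - v)) d).degree ≠ ⊥ := by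
    rw [← hdeg]
    intro hbot
    have : (minorOn (G.updateRow j (h - v)) c).degree ≤ ⊥ := by
      rw [← hbot]
      exact Finset.le_sup (f := fun c : Fin k → Fin n =>
        (minorOn (G.updateRow j (h - v)) c).degree) (Finset.mem_univ c)
    apply hred
    rw [Polynomial.degree_eq_bot.1 (le_bot_iff.1 this), map_zero]
  have h3 := hb'.trans (hle.trans hdeg.le)
  have hπne : π ≠ 0 := by rintro rfl; simp at hπ0
  have hmne : minorOn (G.updateRow j (h - v)) d ≠ 0 := by
    intro h0; apply hne; rw [h0, Polynomial.degree_zero]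
  rw [Polynomial.degree_eq_natDegree hπne] at hπ0 h3
  rw [Polynomial.degree_eq_natDegree hmne] at h3
  norm_cast at hπ0 h3
  omega

lemma red_vecMul (p r : ℕ) (hr : r ≠ 0) (a : Fin k → (ZMod (p ^ r))[X])
    (G : Matrix (Fin k) (Fin n) (ZMod (p ^ r))[X]) (i : Fin n) :
    red p r hr ((a ᵥ* G) i) = ((fun j => red p r hr (a j)) ᵥ* reduceMod p r hr G) i :=
  RingHom.map_vecMul (red p r hr) G a i

lemma sat_irred (p : ℕ) [Fact p.Prime] (r : ℕ) (hr : r ≠ 0)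
    (G : Matrix (Fin k) (Fin n) (ZMod (p ^ r))[X]) (hG : FullRowRank G)
    (hmin : ∀ G' : Matrix (Fin k) (Fin n) (Polynomial (ZMod (p ^ r))),
      FullRowRank G' → code G' = code G → intdeg G ≤ intdeg G')
    (h : Fin n → (ZMod (p ^ r))[X]) (hh : h ∈ polyMod G)
    (π₀ : (ZMod p)[X]) (hπ₀ : Irreducible π₀) (a₀ : Fin k → (ZMod p)[X])
    (ha₀ : π₀ • (fun i => red p r hr (h i)) = a₀ ᵥ* reduceMod p r hr G) :
    ∃ e : Fin k → (ZMod p)[X], (fun i => red p r hr (h i)) = e ᵥ* reduceMod p r hr G := by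
  classical
  obtain ⟨π, a, hπm, hπi, ha⟩ : ∃ (π : (ZMod p)[X]) (a : Fin k → (ZMod p)[X]), π.Monic ∧
      Irreducible π ∧ π • (fun i => red p r hr (h i)) = a ᵥ* reduceMod p r hr G := by
    refine ⟨π₀ * C π₀.leadingCoeff⁻¹, C π₀.leadingCoeff⁻¹ • a₀,
      Polynomial.monic_mul_leadingCoeff_inv hπ₀.ne_zero,
      Polynomial.irreducible_mul_leadingCoeff_inv.2 hπ₀, ?_⟩
    rw [Matrix.smul_vecMul, ← ha₀, smul_smul, mul_comm]
  by_cases hdvd : ∀ i, π ∣ a i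
  · choose e he using hdvd
    refine ⟨e, ?_⟩
    have h1 : a = π • e := funext fun i => by simp [← he]
    rw [h1, Matrix.smul_vecMul] at ha
    ext1 i
    have := congrFun ha i
    simp only [Pi.smul_apply, smul_eq_mul] at this
    exact mul_left_cancel₀ hπi.ne_zero this
  exfalso
  push Not at hdvd
  obtain ⟨j, hj⟩ := hdvd
  obtain ⟨s, t, hst⟩ := hπi.coprime_iff_not_dvd.2 hj
  obtain ⟨s', hs'⟩ := red_surj p r hr s
  obtain ⟨t', ht'⟩ := red_surj p r hr t
  obtain ⟨π', hπ1, hπ2, hπ3⟩ := monic_lift p r hr π hπm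
  choose l hl using fun i => red_surj p r hr (t * a i)
  let A : Fin k → (ZMod (p ^ r))[X] := fun i => if i = j then 1 else l i
  have hA : (fun i => red p r hr (A i)) = t • a + (s * π) • Pi.single j 1 := by
    ext1 i
    by_cases hij : i = j
    · subst hij
      simp only [A, if_true, map_one, Pi.add_apply, Pi.smul_apply, Pi.single_eq_same, smul_eq_mul]
      linear_combination -hst
    · simp [A, hij, hl]
  have hred : ∀ i, ∃ g, (A ᵥ* G - π' • (t' • h + s' • G j)) i = (p : (ZMod (p ^ r))[X]) * g := by
    intro i
    apply red_zero p r hr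
    rw [Pi.sub_apply, map_sub, red_vecMul, hA, Matrix.add_vecMul, Matrix.smul_vecMul,
      Matrix.smul_vecMul, ← ha, Matrix.single_one_vecMul]
    have : (reduceMod p r hr G).row j i = red p r hr (G j i) := rfl
    simp only [Pi.add_apply, Pi.smul_apply, smul_eq_mul, map_mul, map_add, hπ1, hs', ht', this]
    ring
  choose x hx using hred
  refine sat_step p r hr G hG hmin j (t' • h + s' • G j)
    ((polyMod G).add_mem ((polyMod G).smul_mem _ hh) ((polyMod G).smul_mem _ (row_mem G j)))
    π' hπ3 (by rw [hπ2]; exact Polynomial.degree_pos_of_irreducible hπi) A (by simp [A]) x ?_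
  ext1 i
  have := hx i
  rw [Pi.sub_apply] at this
  rw [Pi.add_apply, Pi.smul_apply (p : (ZMod (p ^ r))[X]), smul_eq_mul, ← this]
  ring

lemma red_mem (p : ℕ) [Fact p.Prime] (r : ℕ) (hr : r ≠ 0)
    (G : Matrix (Fin k) (Fin n) (ZMod (p ^ r))[X]) (hG : FullRowRank G)
    (hmin : ∀ G' : Matrix (Fin k) (Fin n) (Polynomial (ZMod (p ^ r))),
      FullRowRank G' → code G' = code G → intdeg G ≤ intdeg G')
    (h : Fin n → (ZMod (p ^ r))[X]) (hh : h ∈ polyMod G) :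
    ∃ e : Fin k → (ZMod p)[X], (fun i => red p r hr (h i)) = e ᵥ* reduceMod p r hr G := by
  have key : ∀ b : (ZMod p)[X], b ≠ 0 → ∀ h ∈ polyMod G,
      (∃ a : Fin k → (ZMod p)[X],
        b • (fun i => red p r hr (h i)) = a ᵥ* reduceMod p r hr G) →
      ∃ e : Fin k → (ZMod p)[X],
        (fun i => red p r hr (h i)) = e ᵥ* reduceMod p r hr G := by
    intro b
    refine WfDvdMonoid.induction_on_irreducible b (fun h => absurd rfl h) ?_ ?_
    · rintro u hu - h hh ⟨a, ha⟩
      obtain ⟨w, hw⟩ := hu.exists_left_inv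
      exact ⟨w • a, by rw [Matrix.smul_vecMul, ← ha, smul_smul, hw, one_smul]⟩
    · rintro b' π hb' hπ ih - h hh ⟨a, ha⟩
      obtain ⟨β, hβ⟩ := red_surj p r hr b'
      have e1 : (fun i => red p r hr ((β • h) i)) = b' • (fun i => red p r hr (h i)) := by
        ext1 i; simp [hβ]
      apply ih hb' h hh
      rw [← e1]
      apply sat_irred p r hr G hG hmin (β • h) ((polyMod G).smul_mem _ hh) π hπ a
      rw [e1, smul_smul, ha]
  have hG' := hG
  obtain ⟨c, hc⟩ := hG
  obtain ⟨a, ha⟩ := cramer_mem p r G c h hh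
  refine key (red p r hr (minorOn G c)) ((nzd_iff p r hr _).1 hc) h hh
    ⟨fun i => red p r hr (a i), ?_⟩
  ext1 i
  rw [← red_vecMul, ← ha]
  simp

lemma gcd_dvd (p : ℕ) [Fact p.Prime] (r : ℕ) (hr : r ≠ 0)
    (G₁ G₂ : Matrix (Fin k) (Fin n) (ZMod (p ^ r))[X]) (hG : FullRowRank G₁)
    (hspan : code G₁ = code G₂)
    (hmin : ∀ G' : Matrix (Fin k) (Fin n) (Polynomial (ZMod (p ^ r))),
      FullRowRank G' → code G' = code G₁ → intdeg G₁ ≤ intdeg G') :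
    gcdMinors (reduceMod p r hr G₁) ∣ gcdMinors (reduceMod p r hr G₂) := by
  have h : ∀ i, G₂ i ∈ polyMod G₁ := by
    intro i
    have := row_mem G₂ i
    change _ ∈ code G₁
    rw [hspan]
    exact this
  choose E hE using fun i => red_mem p r hr G₁ hG hmin (G₂ i) (h i)
  have hm : reduceMod p r hr G₂ = Matrix.of E * reduceMod p r hr G₁ := by
    ext1 i j
    exact congrFun (hE i) j
  unfold gcdMinors
  apply Finset.dvd_gcd
  intro c _
  rw [hm, minor_mul]
  exact (Finset.gcd_dvd (Finset.mem_univ c)).mul_left _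

end codes

end RSP

/-- The Residual Structural Polynomial is independent of the choice of RIDM:
two equivalent reduced internal degree matrices have the same monic GCD of the
maximal minors of their reductions modulo `p`. -/
theorem residual_structural_polynomial_invariant
    (p : ℕ) [Fact p.Prime] (r : ℕ) (hr : r ≠ 0) (k n : ℕ)
    (G₁ G₂ : Matrix (Fin k) (Fin n) (Polynomial (ZMod (p ^ r))))
    (h₁ : FullRowRank G₁) (h₂ : FullRowRank G₂)
    (hspan : code G₁ = code G₂)
    (hmin₁ : ∀ G' : Matrix (Fin k) (Fin n) (Polynomial (ZMod (p ^ r))),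
      FullRowRank G' → code G' = code G₁ → intdeg G₁ ≤ intdeg G')
    (hmin₂ : ∀ G' : Matrix (Fin k) (Fin n) (Polynomial (ZMod (p ^ r))),
      FullRowRank G' → code G' = code G₂ → intdeg G₂ ≤ intdeg G') :
    gcdMinors (reduceMod p r hr G₁) = gcdMinors (reduceMod p r hr G₂) := by
  have h12 := RSP.gcd_dvd p r hr G₁ G₂ h₁ hspan hmin₁
  have h21 := RSP.gcd_dvd p r hr G₂ G₁ h₂ hspan.symm hmin₂
  exact dvd_antisymm_of_normalize_eq Finset.normalize_gcd Finset.normalize_gcd h12 h21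
end

section
/- Let p be a prime, r ≥ 1, and let C be a free convolutional code of length n and rank k over ℤ/p^r, with G a Reduced Internal Degree Matrix encoder of C. Then C is non-catastrophic — i.e., C admits some full-row-rank polynomial generator matrix G' over (ℤ/p^r)[D] (with the same row span as G over the Laurent series ring) such that every Laurent series input u ∈ ((ℤ/p^r)((D)))^k for which u·G' has finite Hamming weight itself has finite Hamming weight — if and only if the monic greatest common divisor in 𝔽_p[D] of the k × k minors of the reduction of G modulo p is equal to D^s for some integer s ≥ 0. -/
open Polynomial Matrix

section GeneralMinors
variable {A : Type*} [CommRing A] {k n : ℕ}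

/-- Expansion of the determinant of a product in terms of maximal minors. -/
lemma det_mul_eq_sum_minorOn (G : Matrix (Fin k) (Fin n) A) (H : Matrix (Fin n) (Fin k) A) :
    (G * H).det = ∑ c : Fin k → Fin n, (∏ i, H (c i) i) * minorOn G c := by
  rw [← Matrix.det_transpose]
  have h1 : (G * H)ᵀ = fun i => ∑ j : Fin n, H j i • (fun l => G l j) := by
    funext i l
    simp [Matrix.mul_apply, Finset.sum_apply, mul_comm]
  have h2 := (Matrix.detRowAlternating (R := A) (n := Fin k)).toMultilinearMap.map_sum
    (fun (i : Fin k) (j : Fin n) => H j i • (fun l => G l j))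
  have h3 : ((G * H)ᵀ).det = ∑ c : Fin k → Fin n,
      (Matrix.detRowAlternating (R := A) (n := Fin k)).toMultilinearMap
        (fun i => H (c i) i • (fun l => G l (c i))) := by
    rw [← h2, ← h1]; rfl
  rw [h3]
  refine Finset.sum_congr rfl fun c _ => ?_
  rw [MultilinearMap.map_smul_univ, smul_eq_mul]
  congr 1
  unfold minorOn
  rw [← Matrix.det_transpose]
  rfl

lemma minorOn_mul (W : Matrix (Fin k) (Fin k) A) (G : Matrix (Fin k) (Fin n) A)
    (c : Fin k → Fin n) : minorOn (W * G) c = W.det * minorOn G c := by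
  unfold minorOn
  rw [← Matrix.det_mul]
  rfl

lemma minorOn_map {B : Type*} [CommRing B] (f : A →+* B) (G : Matrix (Fin k) (Fin n) A)
    (c : Fin k → Fin n) : minorOn (G.map f) c = f (minorOn G c) := by
  unfold minorOn
  rw [RingHom.map_det]
  rfl

/-- If `d` lies in the ideal of maximal minors then `G` has a right inverse up to `d`. -/
lemma exists_right_inverse (G : Matrix (Fin k) (Fin n) A) (d : A)
    (hd : d ∈ Ideal.span (Set.range (minorOn G))) :
    ∃ H : Matrix (Fin n) (Fin k) A, G * H = d • (1 : Matrix (Fin k) (Fin k) A) := by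
  obtain ⟨a, rfl⟩ := Ideal.mem_span_range_iff_exists_fun.1 hd
  refine ⟨∑ c, a c • ((1 : Matrix (Fin n) (Fin n) A).submatrix id c *
    (G.submatrix id c).adjugate), ?_⟩
  rw [Matrix.mul_sum, Finset.sum_smul]
  refine Finset.sum_congr rfl fun c _ => ?_
  rw [Matrix.mul_smul, ← Matrix.mul_assoc]
  have : G * (1 : Matrix (Fin n) (Fin n) A).submatrix id c = G.submatrix id c := by
    ext i j
    simp [Matrix.mul_apply, Matrix.one_apply]
  rw [this, Matrix.mul_adjugate, smul_smul]
  rfl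

/-- Over a field, if all maximal minors vanish then the rows are linearly dependent. -/
lemma exists_vecMul_eq_zero_of_minors {K : Type*} [Field K] (G : Matrix (Fin k) (Fin n) K)
    (h : ∀ c, minorOn G c = 0) : ∃ u : Fin k → K, u ≠ 0 ∧ u ᵥ* G = 0 := by
  by_contra! hcon
  have hker : G.vecMulLinear.ker = ⊥ := by
    rw [LinearMap.ker_eq_bot']
    intro u hu
    by_contra hne
    exact hcon u hne (by simpa using hu)
  obtain ⟨g, hg⟩ := LinearMap.exists_leftInverse_of_injective _ hker
  have hGH : G * (LinearMap.toMatrixRight' g) = 1 := by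
    apply Matrix.toLinearMapRight'.injective
    rw [Matrix.toLinearMapRight'_mul, Matrix.toLinearMapRight'_one]
    have : Matrix.toLinearMapRight' (LinearMap.toMatrixRight' g) = g :=
      Matrix.toLinearMapRight'.apply_symm_apply g
    rw [this]
    exact hg
  have := congrArg Matrix.det hGH
  rw [det_mul_eq_sum_minorOn] at this
  simp [h] at this

end GeneralMinors

section Weier
variable {R : Type*} [CommRing R]

/-- A polynomial that is monic modulo a nilpotent is a unit times a monic polynomial. -/
lemma weierstrass_aux (π : R) (r : ℕ) (hπ : π ^ r = 0) (m : ℕ) :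
    ∀ (i : ℕ), 1 ≤ i → r ≤ i + m → ∀ (q w e : R[X]), w.Monic → q = w + C (π ^ i) * e →
    ∃ v w' : R[X], IsUnit v ∧ w'.Monic ∧ w'.natDegree = w.natDegree ∧ v * q = w' := by
  nontriviality R
  induction m with
  | zero =>
    intro i hi hri q w e hw hq
    refine ⟨1, w, isUnit_one, hw, rfl, ?_⟩
    have : π ^ i = 0 := pow_eq_zero_of_le (by omega) hπ
    rw [hq, this]; simp
  | succ m ih =>
    intro i hi hri q w e hw hq
    set y := e /ₘ w
    set z := e %ₘ w with hz
    have he : e = z + w * y := (modByMonic_add_div e w).symm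
    have hdeg : (C (π ^ i) * z).degree < w.degree := by
      refine lt_of_le_of_lt ?_ (degree_modByMonic_lt e hw)
      rw [← smul_eq_C_mul]
      exact degree_smul_le _ _
    have hw' : (w + C (π ^ i) * z).Monic := hw.add_of_left hdeg
    have hd' : (w + C (π ^ i) * z).natDegree = w.natDegree :=
      natDegree_eq_of_degree_eq (degree_add_eq_left_of_degree_lt hdeg)
    have hnil : IsNilpotent (C (π ^ i) * y) := by
      refine Commute.isNilpotent_mul_right (Commute.all _ _) ⟨r, ?_⟩
      rw [← C_pow, ← pow_mul, mul_comm, pow_mul, hπ, zero_pow (by omega), C_0]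
    obtain ⟨v, w'', hv, hm, hd, hvq⟩ := ih (i + 1) (by omega) (by omega)
      ((1 - C (π ^ i) * y) * q) (w + C (π ^ i) * z)
      (C (π ^ (i - 1)) * (- (w * y * y) - z * y)) hw' (by
        obtain ⟨j, rfl⟩ : ∃ j, i = j + 1 := ⟨i - 1, by omega⟩
        rw [hq, he]
        simp only [C_pow, Nat.add_sub_cancel]
        ring)
    refine ⟨v * (1 - C (π ^ i) * y), w'', hv.mul hnil.isUnit_one_sub, hm, hd.trans hd', ?_⟩
    rw [mul_assoc, hvq]

end Weier

section Strip
variable {K : Type*} [Field K] {k : ℕ}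

/-- Strip off the `X`-part of a square polynomial matrix over a field. -/
lemma strip_X (d : ℕ) : ∀ (M : Matrix (Fin k) (Fin k) K[X]), M.det ≠ 0 → M.det.natDegree = d →
    ∃ (W V : Matrix (Fin k) (Fin k) K[X]) (j : ℕ), M = W * V ∧ V.det = X ^ j ∧
      W.det.coeff 0 ≠ 0 := by
  induction d with
  | zero =>
    intro M hM hd
    refine ⟨M, 1, 0, by simp, by simp, ?_⟩
    intro h
    apply hM
    rw [eq_C_of_natDegree_eq_zero hd, h, C_0]
  | succ d ih =>
    intro M hM hd
    by_cases h0 : M.det.coeff 0 = 0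
    swap
    · exact ⟨M, 1, 0, by simp, by simp, h0⟩
    have hdet : (M.map (constantCoeff : K[X] →+* K)).det = 0 := by
      have := RingHom.map_det (constantCoeff : K[X] →+* K) M
      rw [RingHom.mapMatrix_apply] at this
      rw [← this, constantCoeff_apply, h0]
    obtain ⟨a₀, ha₀, hMa₀⟩ := Matrix.exists_mulVec_eq_zero_iff.2 hdet
    obtain ⟨i, hi⟩ := Function.ne_iff.1 ha₀
    simp only [Pi.zero_apply] at hi
    obtain ⟨a, hai, hMa⟩ : ∃ a : Fin k → K, a i = 1 ∧
        (M.map (constantCoeff : K[X] →+* K)) *ᵥ a = 0 := by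
      refine ⟨(a₀ i)⁻¹ • a₀, by simp [hi], ?_⟩
      rw [Matrix.mulVec_smul, hMa₀, smul_zero]
    have hdvd : ∀ l, X ∣ (M *ᵥ (fun j => C (a j))) l := by
      intro l
      rw [X_dvd_iff, ← constantCoeff_apply]
      have := congrFun hMa l
      simpa [Matrix.mulVec, dotProduct, map_sum] using this
    choose y hy using hdvd
    set M' := M.updateCol i y with hM'
    have hXdet : X * M'.det = M.det := by
      have h1 : Matrix.cramer M (M *ᵥ (fun j => C (a j))) i = M.det := by
        rw [Matrix.cramer_eq_adjugate_mulVec, Matrix.mulVec_mulVec, Matrix.adjugate_mul,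
          Matrix.smul_mulVec, Matrix.one_mulVec]
        simp [hai]
      rw [Matrix.cramer_apply] at h1
      have h2 : M *ᵥ (fun j => C (a j)) = (X : K[X]) • y := by
        funext l; simp [hy l]
      rw [h2, Matrix.det_updateCol_smul] at h1
      exact h1
    have hM'0 : M'.det ≠ 0 := by
      intro h; rw [h, mul_zero] at hXdet; exact hM hXdet.symm
    have hdeg : M'.det.natDegree = d := by
      rw [← hXdet, natDegree_X_mul hM'0] at hd
      omega
    set E : Matrix (Fin k) (Fin k) K[X] :=
      (1 : Matrix (Fin k) (Fin k) K[X]).updateCol i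
        (fun j => if j = i then X else - C (a j)) with hE
    have hME : M = M' * E := by
      ext1 l t
      by_cases ht : t = i
      · subst ht
        rw [Matrix.mul_apply]
        have hyl := hy l
        rw [Matrix.mulVec, dotProduct, ← Finset.add_sum_erase _ _ (Finset.mem_univ t)] at hyl
        rw [← Finset.add_sum_erase _ _ (Finset.mem_univ t)]
        have hs : ∑ x ∈ Finset.univ.erase t, M' l x * E x t =
            - ∑ x ∈ Finset.univ.erase t, M l x * C (a x) := by
          rw [← Finset.sum_neg_distrib]
          refine Finset.sum_congr rfl fun x hx => ?_
          have hx' : x ≠ t := Finset.ne_of_mem_erase hx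
          simp [hM', hE, hx']
        rw [hs]
        simp only [hM', hE, Matrix.updateCol_self, if_true]
        rw [hai, C_1, mul_one] at hyl
        linear_combination hyl
      · rw [Matrix.mul_apply]
        simp only [hE, Matrix.updateCol_ne ht, Matrix.one_apply]
        simp [hM', ht]
    have hEdet : E.det = X := by
      apply mul_left_cancel₀ hM'0
      rw [← Matrix.det_mul, ← hME, ← hXdet, mul_comm]
    obtain ⟨W, V, j, h1, h2, h3⟩ := ih M' hM'0 hdeg
    refine ⟨W, V * E, j + 1, ?_, ?_, h3⟩
    · rw [← Matrix.mul_assoc, ← h1]; exact hME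
    · rw [Matrix.det_mul, h2, hEdet, pow_succ]

end Strip

section Lift
variable {R K : Type*} [CommRing R] [Field K] (ψ : R →+* K) (π : R) (r : ℕ) {k n : ℕ}

lemma poly_ker (hker : ∀ x, ψ x = 0 → ∃ y, x = π * y) (f : R[X]) (hf : f.map ψ = 0) :
    ∃ g, f = C π * g := by
  have : C π ∣ f := by
    rw [C_dvd_iff_dvd_coeff]
    intro i
    obtain ⟨y, hy⟩ := hker (f.coeff i) (by rw [← coeff_map, hf, coeff_zero])
    exact ⟨y, hy⟩
  exact this

lemma mat_ker (hker : ∀ x, ψ x = 0 → ∃ y, x = π * y) {m l : ℕ}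
    (M : Matrix (Fin m) (Fin l) R[X]) (hM : M.map (mapRingHom ψ) = 0) :
    ∃ E : Matrix (Fin m) (Fin l) R[X], M = C π • E := by
  have : ∀ i j, ∃ g, M i j = C π * g := fun i j =>
    poly_ker ψ π hker (M i j) (congrFun (congrFun hM i) j)
  choose E hE using this
  exact ⟨Matrix.of E, by ext1 i j; simp [hE]⟩

lemma mat_lift (hsurj : Function.Surjective ψ) {m l : ℕ} (M : Matrix (Fin m) (Fin l) K[X]) :
    ∃ E : Matrix (Fin m) (Fin l) R[X], E.map (mapRingHom ψ) = M := by
  have : ∀ i j, ∃ g : R[X], g.map ψ = M i j := fun i j => Polynomial.map_surjective ψ hsurj _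
  choose E hE using this
  exact ⟨Matrix.of E, by ext1 i j; simp [hE]⟩

lemma isUnit_of_map_ne_zero (hsurj : Function.Surjective ψ)
    (hker : ∀ x, ψ x = 0 → ∃ y, x = π * y) (hπ : π ^ r = 0) (x : R) (hx : ψ x ≠ 0) :
    IsUnit x := by
  obtain ⟨y, hy⟩ := hsurj (ψ x)⁻¹
  obtain ⟨z, hz⟩ := hker (1 - x * y) (by simp [hy, hx])
  have hnil : IsNilpotent (π * z) := Commute.isNilpotent_mul_right (Commute.all _ _) ⟨r, hπ⟩
  have hu : IsUnit (x * y) := by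
    have : x * y = 1 - π * z := by rw [← hz]; ring
    rw [this]; exact hnil.isUnit_one_sub
  exact isUnit_of_mul_isUnit_left hu

/-- If `x ≡ y` modulo the nilpotent `π` then `y` divides a power of `x`. -/
lemma dvd_pow_of_sub {A : Type*} [CommRing A] (π x y z : A) (r : ℕ) (hπ : π ^ r = 0)
    (h : x = y + π * z) : y ∣ x ^ r := by
  have := sub_dvd_pow_sub_pow x (π * z) r
  rw [mul_pow, hπ, zero_mul, sub_zero] at this
  rwa [h, add_sub_cancel_right, ← h] at this

lemma X_inverse (hker : ∀ x, ψ x = 0 → ∃ y, x = π * y) (hπ : π ^ r = 0)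
    (V : Matrix (Fin k) (Fin k) R[X]) (j : ℕ) (hV : V.det.map ψ = X ^ j) :
    ∃ (U : Matrix (Fin k) (Fin k) R[X]) (N : ℕ),
      V * U = (X ^ N : R[X]) • (1 : Matrix (Fin k) (Fin k) R[X]) ∧
      U * V = (X ^ N : R[X]) • (1 : Matrix (Fin k) (Fin k) R[X]) := by
  obtain ⟨z, hz⟩ := poly_ker ψ π hker (X ^ j - V.det) (by simp [hV])
  have hπ' : (C π : R[X]) ^ r = 0 := by rw [← C_pow, hπ, C_0]
  obtain ⟨s, hs⟩ := dvd_pow_of_sub (C π) (X ^ j) V.det z r hπ' (by rw [← hz]; ring)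
  refine ⟨s • V.adjugate, j * r, ?_, ?_⟩
  · rw [Matrix.mul_smul, Matrix.mul_adjugate, smul_smul, pow_mul, hs, mul_comm]
  · rw [Matrix.smul_mul, Matrix.adjugate_mul, smul_smul, pow_mul, hs, mul_comm]

lemma det_map_mapRingHom (M : Matrix (Fin k) (Fin k) R[X]) :
    (M.map (mapRingHom ψ)).det = M.det.map ψ := by
  have := RingHom.map_det (mapRingHom ψ) M
  rw [RingHom.mapMatrix_apply] at this
  rw [← this]; rfl

lemma isCoprime_X_pow {R : Type*} [CommRing R] (h : R[X]) (hu : IsUnit (h.coeff 0)) (N : ℕ) :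
    IsCoprime h (X ^ N) := by
  apply IsCoprime.pow_right
  obtain ⟨u, hu⟩ := hu
  refine ⟨C (↑u⁻¹ : R), - C (↑u⁻¹ : R) * h.divX, ?_⟩
  have h1 := divX_mul_X_add h
  have h2 : (C (↑u⁻¹ : R) : R[X]) * C (h.coeff 0) = 1 := by
    rw [← C_mul, ← hu, Units.inv_mul, C_1]
  calc C (↑u⁻¹ : R) * h + - C (↑u⁻¹ : R) * h.divX * X
      = C (↑u⁻¹ : R) * (h.divX * X + C (h.coeff 0)) + - C (↑u⁻¹ : R) * h.divX * X := by rw [h1]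
    _ = C (↑u⁻¹ : R) * C (h.coeff 0) := by ring
    _ = 1 := h2

/-- Lifted factorization: up to powers of `X`, a square matrix factors as `W * V'` where
`det W` is prime to `X` and carries all of the prime-to-`X` part of the determinant mod `π`. -/
lemma factor_lift (hsurj : Function.Surjective ψ) (hker : ∀ x, ψ x = 0 → ∃ y, x = π * y)
    (hπ0 : ψ π = 0) (hπ : π ^ r = 0) (T : Matrix (Fin k) (Fin k) R[X])
    (hT : T.det.map ψ ≠ 0) :
    ∃ (W V' : Matrix (Fin k) (Fin k) R[X]) (e e' j : ℕ),
      (X ^ e : R[X]) • T = (X ^ e' : R[X]) • (W * V') ∧ (W.det.map ψ).coeff 0 ≠ 0 ∧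
      T.det.map ψ = W.det.map ψ * X ^ j := by
  have hπ' : (C π : R[X]) ^ r = 0 := by rw [← C_pow, hπ, C_0]
  obtain ⟨W₀, V₀, j, hTWV, hV₀, hW₀⟩ := strip_X _ (T.map (mapRingHom ψ))
    (by rwa [det_map_mapRingHom]) rfl
  obtain ⟨V, hV⟩ := mat_lift ψ hsurj V₀
  obtain ⟨Wl, hWl⟩ := mat_lift ψ hsurj W₀
  have hVdet : V.det.map ψ = X ^ j := by rw [← det_map_mapRingHom, hV, hV₀]
  obtain ⟨U, N, hVU, hUV⟩ := X_inverse ψ π r hker hπ V j hVdet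
  set S := T * U with hS
  have hXN : ((X ^ N : R[X]) • (1 : Matrix (Fin k) (Fin k) R[X])).map (mapRingHom ψ)
      = (X ^ N : K[X]) • (1 : Matrix (Fin k) (Fin k) K[X]) := by
    ext1 a b
    by_cases hab : a = b <;> simp [hab]
  have hφS : S.map (mapRingHom ψ) = (X ^ N : K[X]) • W₀ := by
    rw [hS, Matrix.map_mul, hTWV, Matrix.mul_assoc, ← hV, ← Matrix.map_mul, hVU, hXN,
      Matrix.mul_smul, Matrix.mul_one]
  obtain ⟨E, hE⟩ := mat_ker ψ π hker (S - (X ^ N : R[X]) • Wl) (by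
    ext1 a b
    have h1 := congrFun (congrFun hφS a) b
    have h2 := congrFun (congrFun hWl a) b
    simp only [Matrix.map_apply, Matrix.smul_apply, smul_eq_mul, coe_mapRingHom] at h1 h2
    simp [h1, h2])
  have hdetS : S.det.map ψ = X ^ (N * k) * W₀.det := by
    rw [← det_map_mapRingHom, hφS, Matrix.det_smul, Fintype.card_fin, ← pow_mul]
  obtain ⟨α, β, hαβ⟩ := isCoprime_X_pow W₀.det (isUnit_iff_ne_zero.2 hW₀) N
  obtain ⟨α', hα'⟩ := Polynomial.map_surjective ψ hsurj α
  obtain ⟨β', hβ'⟩ := Polynomial.map_surjective ψ hsurj β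
  obtain ⟨γ, hγ⟩ := poly_ker ψ π hker
    (X ^ (N * k) * (1 - β' * X ^ N) - α' * S.det) (by
      simp only [Polynomial.map_sub, Polynomial.map_mul, Polynomial.map_pow, map_X,
        Polynomial.map_one, hα', hβ', hdetS]
      linear_combination (-X ^ (N * k)) * hαβ)
  obtain ⟨δ₀, hδ₀⟩ := dvd_pow_of_sub (C π) (X ^ (N * k) * (1 - β' * X ^ N)) (α' * S.det) γ r hπ'
    (by rw [← hγ]; ring)
  obtain ⟨ε₀, hε₀⟩ := sub_dvd_pow_sub_pow (1 : R[X]) (1 - β' * X ^ N) r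
  set b := N * k * r with hb
  obtain ⟨δ, ε, hδε⟩ : ∃ δ ε : R[X], X ^ b = S.det * δ + X ^ (N + b) * ε := by
    refine ⟨α' * δ₀, β' * ε₀, ?_⟩
    rw [mul_pow, ← pow_mul, ← hb] at hδ₀
    rw [one_pow] at hε₀
    rw [pow_add]
    linear_combination hδ₀ + X ^ b * hε₀
  set Y := δ • (S.adjugate * E) with hY
  set Z := ε • E with hZ
  have hSY : S * Y + (X ^ (N + b) : R[X]) • Z = (X ^ b : R[X]) • E := by
    rw [hY, hZ, Matrix.mul_smul, ← Matrix.mul_assoc, Matrix.mul_adjugate, Matrix.smul_mul,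
      Matrix.one_mul, smul_smul, smul_smul, ← add_smul, hδε]
    congr 1; ring
  set P := (X ^ b : R[X]) • (1 : Matrix (Fin k) (Fin k) R[X]) - (C π : R[X]) • Y with hP
  set W := Wl + (C π : R[X]) • Z with hW
  have hSeq : S = (X ^ N : R[X]) • Wl + (C π : R[X]) • E := by
    rw [← hE]; abel
  have hSP : S * P = (X ^ (N + b) : R[X]) • W := by
    have h1 : S * Y = (X ^ b : R[X]) • E - (X ^ (N + b) : R[X]) • Z := by rw [← hSY]; abel
    rw [hP, hW, Matrix.mul_sub, Matrix.mul_smul, Matrix.mul_smul, Matrix.mul_one, h1]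
    nth_rewrite 1 [hSeq]
    ext1 i l
    simp only [Matrix.sub_apply, Matrix.add_apply, Matrix.smul_apply, smul_eq_mul]
    ring
  have hPdet : P.det.map ψ = X ^ (b * k) := by
    rw [← det_map_mapRingHom]
    have : P.map (mapRingHom ψ) = (X ^ b : K[X]) • (1 : Matrix (Fin k) (Fin k) K[X]) := by
      ext1 a c
      by_cases hac : a = c <;> simp [hP, hac, hπ0]
    rw [this, Matrix.det_smul, Matrix.det_one, Fintype.card_fin, mul_one, ← pow_mul]
  obtain ⟨Q, M, hPQ, -⟩ := X_inverse ψ π r hker hπ P _ hPdet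
  have hWdet : W.det.map ψ = W₀.det := by
    rw [← det_map_mapRingHom]
    congr 1
    rw [← hWl]
    ext1 a c
    simp [hW, hπ0]
  refine ⟨W, Q * V, M + N, N + b, j, ?_, by rwa [hWdet], ?_⟩
  · calc (X ^ (M + N) : R[X]) • T = T * ((X ^ (M + N) : R[X]) • 1) := by
          rw [Matrix.mul_smul, Matrix.mul_one]
      _ = T * (U * (P * Q) * V) := by
          rw [hPQ, Matrix.mul_smul U, Matrix.mul_one U, Matrix.smul_mul, hUV, smul_smul, pow_add]
      _ = (S * P) * (Q * V) := by simp only [hS, Matrix.mul_assoc]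
      _ = _ := by rw [hSP, Matrix.smul_mul]
  · rw [hWdet, ← hV₀, ← Matrix.det_mul, ← hTWV, det_map_mapRingHom]

/-- Descent of the factorization to the generator matrix. -/
lemma factor_G (hsurj : Function.Surjective ψ) (hker : ∀ x, ψ x = 0 → ∃ y, x = π * y)
    (hπ0 : ψ π = 0) (hπ : π ^ r = 0) (T : Matrix (Fin k) (Fin k) R[X])
    (hT : T.det.map ψ ≠ 0) (G G' : Matrix (Fin k) (Fin n) R[X]) (m : ℕ)
    (hG : (X ^ m : R[X]) • G = T * G') :
    ∃ (W : Matrix (Fin k) (Fin k) R[X]) (G'' : Matrix (Fin k) (Fin n) R[X]) (j : ℕ),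
      G = W * G'' ∧ (W.det.map ψ).coeff 0 ≠ 0 ∧ T.det.map ψ = W.det.map ψ * X ^ j := by
  obtain ⟨W, V', e, e', j, h1, h2, h3⟩ := factor_lift ψ π r hsurj hker hπ0 hπ T hT
  have hWu : IsUnit (W.det.coeff 0) :=
    isUnit_of_map_ne_zero ψ π r hsurj hker hπ _ (by rwa [coeff_map] at h2)
  set Kk := (X ^ e' : R[X]) • (V' * G') with hK
  have hGK : (X ^ (e + m) : R[X]) • G = W * Kk := by
    rw [pow_add, ← smul_smul, hG, ← Matrix.smul_mul, h1, hK, Matrix.mul_smul, Matrix.smul_mul,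
      Matrix.mul_assoc]
  have hdvd : ∀ i l, (X ^ (e + m) : R[X]) ∣ Kk i l := by
    intro i l
    have h4 : W.det • Kk = (X ^ (e + m) : R[X]) • (W.adjugate * G) := by
      rw [← Matrix.mul_smul, hGK, ← Matrix.mul_assoc, Matrix.adjugate_mul, Matrix.smul_mul,
        Matrix.one_mul]
    have h5 : (X ^ (e + m) : R[X]) ∣ W.det * Kk i l :=
      ⟨(W.adjugate * G) i l, congrFun (congrFun h4 i) l⟩
    exact (isCoprime_X_pow W.det hWu (e + m)).symm.dvd_of_dvd_mul_left h5
  choose G'' hG'' using hdvd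
  have hKG : Kk = (X ^ (e + m) : R[X]) • Matrix.of G'' := by
    ext1 i l; simp [hG'']
  refine ⟨W, Matrix.of G'', j, ?_, h2, h3⟩
  rw [hKG, Matrix.mul_smul] at hGK
  ext1 i l
  have := congrFun (congrFun hGK i) l
  simp only [Matrix.smul_apply, smul_eq_mul] at this
  exact (monic_X_pow (R := R) (e + m)).isRegular.left this

end Lift

section Laurent
variable {R : Type*} [CommRing R] {k n : ℕ}

lemma polyToLS_apply (f : R[X]) :
    polyToLS R f = HahnSeries.ofPowerSeries ℤ R (f : PowerSeries R) := rfl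

lemma polyToLS_injective : Function.Injective (polyToLS R) := by
  intro f g h
  rw [polyToLS_apply, polyToLS_apply] at h
  exact Polynomial.coe_injective R (HahnSeries.ofPowerSeries_injective h)

lemma polyToLS_X : polyToLS R X = HahnSeries.single (1 : ℤ) (1 : R) := by
  rw [polyToLS_apply, Polynomial.coe_X, HahnSeries.ofPowerSeries_X]

lemma isUnit_polyToLS (f : R[X]) (hf : IsUnit (f.coeff 0)) : IsUnit (polyToLS R f) := by
  rw [polyToLS_apply]
  apply IsUnit.map
  rw [PowerSeries.isUnit_iff_constantCoeff, Polynomial.constantCoeff_coe]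
  exact hf

lemma finite_support_add (x y : LaurentSeries R) (hx : x.support.Finite)
    (hy : y.support.Finite) : (x + y).support.Finite :=
  (hx.union hy).subset (HahnSeries.support_add_subset x y)

lemma finite_support_mul (x y : LaurentSeries R) (hx : x.support.Finite)
    (hy : y.support.Finite) : (x * y).support.Finite :=
  (hx.add hy).subset HahnSeries.support_mul_subset

lemma finite_support_single (a : ℤ) (c : R) :
    (HahnSeries.single a c : LaurentSeries R).support.Finite :=
  (Set.finite_singleton a).subset HahnSeries.support_single_subset

lemma finite_support_sum {ι : Type*} (s : Finset ι) (x : ι → LaurentSeries R)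
    (hx : ∀ i ∈ s, (x i).support.Finite) : (∑ i ∈ s, x i).support.Finite := by
  classical
  induction s using Finset.induction_on with
  | empty => simp
  | insert a s ha ih =>
    rw [Finset.sum_insert ha]
    exact finite_support_add _ _ (hx a (Finset.mem_insert_self a s))
      (ih fun i hi => hx i (Finset.mem_insert_of_mem hi))

lemma finite_support_poly (f : R[X]) : (polyToLS R f).support.Finite := by
  induction f using Polynomial.induction_on' with
  | add f g hf hg => rw [map_add]; exact finite_support_add _ _ hf hg
  | monomial m a =>
    have : polyToLS R (monomial m a) = HahnSeries.single (m : ℤ) a := by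
      rw [← C_mul_X_pow_eq_monomial, map_mul, map_pow, polyToLS_X, polyToLS_apply,
        Polynomial.coe_C, HahnSeries.ofPowerSeries_C, HahnSeries.single_pow]
      simp
    rw [this]
    exact finite_support_single _ _

lemma nonCatastrophic_of_span (G : Matrix (Fin k) (Fin n) R[X]) (m : ℕ)
    (h : (X ^ m : R[X]) ∈ Ideal.span (Set.range (minorOn G))) : NonCatastrophic G := by
  obtain ⟨H, hH⟩ := exists_right_inverse G _ h
  intro u hu i
  have h1 : (u ᵥ* G.map (polyToLS R)) ᵥ* H.map (polyToLS R) = (polyToLS R X) ^ m • u := by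
    rw [Matrix.vecMul_vecMul, ← Matrix.map_mul, hH]
    have : ((X ^ m : R[X]) • (1 : Matrix (Fin k) (Fin k) R[X])).map (polyToLS R)
        = (polyToLS R X) ^ m • (1 : Matrix (Fin k) (Fin k) (LaurentSeries R)) := by
      ext1 a b
      by_cases hab : a = b <;> simp [hab]
    rw [this, Matrix.vecMul_smul, Matrix.vecMul_one]
  have h2 : ((polyToLS R X) ^ m * u i).support.Finite := by
    have h3 := congrFun h1 i
    rw [Pi.smul_apply, smul_eq_mul] at h3
    rw [← h3]
    exact finite_support_sum _ _ fun j _ =>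
      finite_support_mul _ _ (hu j) (finite_support_poly _)
  have h4 : u i = HahnSeries.single (-(m : ℤ)) (1 : R) * ((polyToLS R X) ^ m * u i) := by
    rw [← mul_assoc, polyToLS_X, HahnSeries.single_pow, HahnSeries.single_mul_single]
    simp
  rw [h4]
  exact finite_support_mul _ _ (finite_support_single _ _) h2

lemma code_eq_of_mul (W : Matrix (Fin k) (Fin k) R[X]) (G : Matrix (Fin k) (Fin n) R[X])
    (hW : IsUnit (W.det.coeff 0)) : code G = code (W * G) := by
  have hdet : IsUnit (W.map (polyToLS R)).det := by
    have := RingHom.map_det (polyToLS R) W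
    rw [RingHom.mapMatrix_apply] at this
    rw [← this]
    exact isUnit_polyToLS _ hW
  ext v
  constructor
  · rintro ⟨u, rfl⟩
    refine ⟨u ᵥ* (W.map (polyToLS R))⁻¹, ?_⟩
    rw [Matrix.map_mul, ← Matrix.vecMul_vecMul, Matrix.vecMul_vecMul _ _ (W.map _),
      Matrix.nonsing_inv_mul _ hdet, Matrix.vecMul_one]
  · rintro ⟨u, rfl⟩
    exact ⟨u ᵥ* W.map (polyToLS R), by rw [Matrix.map_mul, Matrix.vecMul_vecMul]⟩

lemma exists_transition (G G' : Matrix (Fin k) (Fin n) R[X]) (hcode : code G' = code G)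
    (m : ℕ) (h : (X ^ m : R[X]) ∈ Ideal.span (Set.range (minorOn G'))) :
    ∃ T : Matrix (Fin k) (Fin k) R[X], (X ^ m : R[X]) • G = T * G' := by
  obtain ⟨H, hH⟩ := exists_right_inverse G' _ h
  refine ⟨G * H, ?_⟩
  have hrow : ∀ i, ∃ t : Fin k → LaurentSeries R,
      (G.map (polyToLS R)) i = t ᵥ* G'.map (polyToLS R) := by
    intro i
    have : (G.map (polyToLS R)) i ∈ code G := ⟨Pi.single i 1, by simp; rfl⟩
    rw [← hcode] at this
    exact this
  choose T hT using hrow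
  have hTG : G.map (polyToLS R) = Matrix.of T * G'.map (polyToLS R) := by
    ext1 i l
    rw [congrFun (hT i) l]; rfl
  have hmap1 : ((X ^ m : R[X]) • (1 : Matrix (Fin k) (Fin k) R[X])).map (polyToLS R)
        = (polyToLS R X) ^ m • (1 : Matrix (Fin k) (Fin k) (LaurentSeries R)) := by
    ext1 a b
    by_cases hab : a = b <;> simp [hab]
  have hmap2 : ((X ^ m : R[X]) • G).map (polyToLS R)
        = (polyToLS R X) ^ m • G.map (polyToLS R) := by
    ext1 a b
    simp
  apply Matrix.map_injective (polyToLS_injective (R := R))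
  beta_reduce
  rw [hmap2, Matrix.map_mul, Matrix.map_mul]
  nth_rewrite 2 [hTG]
  rw [Matrix.mul_assoc (Matrix.of T), ← Matrix.map_mul, hH, hmap1, Matrix.mul_smul, Matrix.mul_one,
    Matrix.smul_mul, ← hTG]

end Laurent

section GcdPart
variable {K : Type*} [Field K] [DecidableEq K]

lemma gcd_mem_span {ι : Type*} [Fintype ι] (f : ι → K[X]) :
    Finset.univ.gcd f ∈ Ideal.span (Set.range f) := by
  obtain ⟨d, hd⟩ := (IsPrincipalIdealRing.principal (Ideal.span (Set.range f))).principal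
  rw [← Ideal.span] at hd
  rw [hd, Ideal.mem_span_singleton]
  apply Finset.dvd_gcd
  intro c _
  rw [← Ideal.mem_span_singleton, ← hd]
  exact Ideal.subset_span ⟨c, rfl⟩

lemma gcd_eq_X_pow {ι : Type*} [Fintype ι] (f : ι → K[X]) (s : ℕ)
    (h : Finset.univ.gcd f ∣ X ^ s) : ∃ i : ℕ, Finset.univ.gcd f = X ^ i := by
  obtain ⟨i, -, hi⟩ := (dvd_prime_pow prime_X s).1 h
  refine ⟨i, ?_⟩
  rw [← Finset.normalize_gcd, normalize_eq_normalize_iff_associated.2 hi,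
    (monic_X_pow i).normalize_eq_self]

end GcdPart

section Lift2
variable {R K : Type*} [CommRing R] [Field K] (ψ : R →+* K) (π : R) (r : ℕ) {k n : ℕ}

lemma lift_span (hsurj : Function.Surjective ψ) (hker : ∀ x, ψ x = 0 → ∃ y, x = π * y)
    (hπ : π ^ r = 0) (G : Matrix (Fin k) (Fin n) R[X]) (s : ℕ)
    (h : (X ^ s : K[X]) ∈ Ideal.span (Set.range (minorOn (G.map (mapRingHom ψ))))) :
    (X ^ (s * r) : R[X]) ∈ Ideal.span (Set.range (minorOn G)) := by
  obtain ⟨a, ha⟩ := Ideal.mem_span_range_iff_exists_fun.1 h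
  have : ∀ c, ∃ b : R[X], b.map ψ = a c := fun c => Polynomial.map_surjective ψ hsurj _
  choose b hb using this
  have hy : (∑ c, b c * minorOn G c) ∈ Ideal.span (Set.range (minorOn G)) :=
    Ideal.mem_span_range_iff_exists_fun.2 ⟨b, rfl⟩
  obtain ⟨z, hz⟩ := poly_ker ψ π hker (X ^ s - ∑ c, b c * minorOn G c) (by
    rw [Polynomial.map_sub, Polynomial.map_pow, map_X, Polynomial.map_sum, ← ha, sub_eq_zero]
    refine Finset.sum_congr rfl fun c _ => ?_
    rw [Polynomial.map_mul, hb, minorOn_map]; rfl)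
  have hπ' : (C π : R[X]) ^ r = 0 := by rw [← C_pow, hπ, C_0]
  have hd := dvd_pow_of_sub (C π) (X ^ s) (∑ c, b c * minorOn G c) z r hπ' (by rw [← hz]; ring)
  rw [pow_mul]
  exact Ideal.mem_of_dvd _ hd hy

lemma fullRank_map (hr : r ≠ 0) (hker : ∀ x, ψ x = 0 → ∃ y, x = π * y) (hπ : π ^ r = 0)
    (hann : ∀ a, π ^ (r - 1) * a = 0 → ψ a = 0)
    (G : Matrix (Fin k) (Fin n) R[X]) (hG : FullRowRank G) :
    ∃ c, (minorOn G c).map ψ ≠ 0 := by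
  obtain ⟨c, hc⟩ := hG
  refine ⟨c, fun h => ?_⟩
  obtain ⟨g, hg⟩ := poly_ker ψ π hker _ h
  have h1 := Polynomial.mem_nonZeroDivisors_iff.1 hc (π ^ (r - 1)) (by
    rw [smul_eq_C_mul, hg, ← mul_assoc, ← C_mul, ← pow_succ, Nat.sub_add_cancel (by omega), hπ]
    simp)
  have h2 := hann 1 (by rw [h1, zero_mul])
  simp at h2

/-- Non-catastrophic matrices: no polynomial prime to `X` divides all minors mod `π`. -/
lemma nonCat_irred (hr : r ≠ 0) (hsurj : Function.Surjective ψ)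
    (hker : ∀ x, ψ x = 0 → ∃ y, x = π * y) (hπ : π ^ r = 0)
    (hann : ∀ a, π ^ (r - 1) * a = 0 → ψ a = 0)
    (G : Matrix (Fin k) (Fin n) R[X]) (hG : NonCatastrophic G) (f : K[X])
    (hf : Irreducible f) (hf0 : f.coeff 0 ≠ 0)
    (hdvd : ∀ c, f ∣ minorOn (G.map (mapRingHom ψ)) c) : False := by
  have : Fact (Irreducible f) := ⟨hf⟩
  obtain ⟨u, hu, huG⟩ := exists_vecMul_eq_zero_of_minors
    ((G.map (mapRingHom ψ)).map (AdjoinRoot.mk f)) (fun c => by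
      rw [minorOn_map, AdjoinRoot.mk_eq_zero]; exact hdvd c)
  have : ∀ i, ∃ g : R[X], AdjoinRoot.mk f (g.map ψ) = u i := by
    intro i
    obtain ⟨g, hg⟩ := AdjoinRoot.mk_surjective (g := f) (u i)
    obtain ⟨g', hg'⟩ := Polynomial.map_surjective ψ hsurj g
    exact ⟨g', by rw [hg', hg]⟩
  choose v hv using this
  obtain ⟨f', hf'⟩ := Polynomial.map_surjective ψ hsurj f
  have hdiv : ∀ l, ∃ y : R[X], C (π ^ (r - 1)) * (v ᵥ* G) l = f' * (C (π ^ (r - 1)) * y) := by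
    intro l
    have h1 : f ∣ ((v ᵥ* G) l).map ψ := by
      rw [← AdjoinRoot.mk_eq_zero]
      have h2 := congrFun huG l
      simp only [Matrix.vecMul, dotProduct, Matrix.map_apply, Pi.zero_apply, ← hv,
        coe_mapRingHom] at h2
      simp only [Matrix.vecMul, dotProduct, Polynomial.map_sum, Polynomial.map_mul, map_sum,
        map_mul]
      exact h2
    obtain ⟨y₀, hy₀⟩ := h1
    obtain ⟨y, hy⟩ := Polynomial.map_surjective ψ hsurj y₀
    obtain ⟨z, hz⟩ := poly_ker ψ π hker ((v ᵥ* G) l - f' * y) (by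
      rw [Polynomial.map_sub, Polynomial.map_mul, hy₀, hy, hf', sub_self])
    refine ⟨y, ?_⟩
    have h3 : C (π ^ (r - 1)) * (C π * z) = 0 := by
      rw [← mul_assoc, ← C_mul, ← pow_succ, Nat.sub_add_cancel (by omega), hπ]
      simp
    rw [← hz] at h3
    linear_combination h3
  choose y hy using hdiv
  have hf'u : IsUnit (f'.coeff 0) :=
    isUnit_of_map_ne_zero ψ π r hsurj hker hπ _ (by rwa [← coeff_map, hf'])
  have hfu : IsUnit (f' : PowerSeries R) := by
    rw [PowerSeries.isUnit_iff_constantCoeff, Polynomial.constantCoeff_coe]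
    exact hf'u
  obtain ⟨g, hg⟩ := hfu.exists_right_inv
  set x : Fin k → LaurentSeries R := fun i =>
    HahnSeries.ofPowerSeries ℤ R (PowerSeries.C (π ^ (r - 1)) * ((v i : PowerSeries R) * g))
    with hx
  have hout : ∀ l, (x ᵥ* G.map (polyToLS R)) l = polyToLS R (C (π ^ (r - 1)) * y l) := by
    intro l
    have h1 : (x ᵥ* G.map (polyToLS R)) l = HahnSeries.ofPowerSeries ℤ R
        ((((C (π ^ (r - 1)) * (v ᵥ* G) l : R[X])) : PowerSeries R) * g) := by
      simp only [Matrix.vecMul, dotProduct, hx, Matrix.map_apply, polyToLS_apply]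
      simp only [← map_mul, ← map_sum]
      congr 1
      rw [Polynomial.coe_mul, Polynomial.coe_C]
      have : (((∑ i, v i * G i l : R[X])) : PowerSeries R) =
          ∑ i, (v i : PowerSeries R) * (G i l : PowerSeries R) := by
        have := map_sum (Polynomial.coeToPowerSeries.ringHom (R := R)) (fun i => v i * G i l)
          Finset.univ
        simp only [Polynomial.coeToPowerSeries.ringHom_apply, Polynomial.coe_mul] at this
        exact this
      rw [this, Finset.mul_sum, Finset.sum_mul]
      refine Finset.sum_congr rfl fun i _ => ?_
      ring
    rw [h1, hy, polyToLS_apply, Polynomial.coe_mul]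
    congr 1
    rw [mul_right_comm, hg, one_mul]
  have hfin : FiniteWeight x := hG x (fun l => by rw [hout]; exact finite_support_poly _)
  apply hu
  funext i
  rw [Pi.zero_apply, ← hv, AdjoinRoot.mk_eq_zero]
  have hpre : {m : ℕ | π ^ (r - 1) * PowerSeries.coeff m ((v i : PowerSeries R) * g) ≠ 0}.Finite := by
    have h1 := (hfin i).preimage (f := fun m : ℕ => (m : ℤ)) (Nat.cast_injective.injOn)
    refine h1.subset fun m hm => ?_
    simp only [Set.mem_preimage, HahnSeries.mem_support, hx, HahnSeries.ofPowerSeries_apply_coeff,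
      PowerSeries.coeff_C_mul]
    exact hm
  obtain ⟨M, hM⟩ := hpre.bddAbove
  have hzero : ∀ m, M < m → ψ (PowerSeries.coeff m ((v i : PowerSeries R) * g)) = 0 := by
    intro m hm
    apply hann
    by_contra hne
    exact absurd (hM hne) (not_le.2 hm)
  set q := PowerSeries.trunc (M + 1) (PowerSeries.map ψ ((v i : PowerSeries R) * g)) with hq
  have hqe : (q : PowerSeries K) = PowerSeries.map ψ ((v i : PowerSeries R) * g) := by
    ext m
    rw [Polynomial.coeff_coe, hq, PowerSeries.coeff_trunc, PowerSeries.coeff_map]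
    split_ifs with h
    · rfl
    · rw [hzero m (by omega)]
  refine ⟨q, ?_⟩
  apply Polynomial.coe_injective K
  rw [Polynomial.coe_mul, hqe, ← hf', Polynomial.polynomial_map_coe,
    Polynomial.polynomial_map_coe, ← map_mul]
  congr 1
  rw [mul_left_comm, hg, mul_one]

/-- The Weierstrass type degree drop. -/
lemma intdeg_drop (hsurj : Function.Surjective ψ)
    (hker : ∀ x, ψ x = 0 → ∃ y, x = π * y) (hπ : π ^ r = 0) 
    (W : Matrix (Fin k) (Fin k) R[X]) (G : Matrix (Fin k) (Fin n) R[X])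
    (hG : FullRowRank (W * G)) (hW : (W.det.map ψ).coeff 0 ≠ 0)
    (hd : (W.det.map ψ).natDegree ≠ 0) :
    ∃ G₃ : Matrix (Fin k) (Fin n) R[X], FullRowRank G₃ ∧ code G₃ = code (W * G) ∧
      intdeg G₃ < intdeg (W * G) := by
  have : Nontrivial R := ψ.domain_nontrivial
  set q := W.det with hqdef
  have hq0 : q.map ψ ≠ 0 := by intro h; rw [h] at hd; simp at hd
  have hlc : (q.map ψ).leadingCoeff ≠ 0 := leadingCoeff_ne_zero.2 hq0
  obtain ⟨c₀, hc₀⟩ := hsurj ((q.map ψ).leadingCoeff)⁻¹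
  have hc₀u : IsUnit c₀ := isUnit_of_map_ne_zero ψ π r hsurj hker hπ _ (by
    rw [hc₀]; exact inv_ne_zero hlc)
  have hmonic : ((C c₀ * q).map ψ).Monic := by
    rw [Polynomial.map_mul, map_C, hc₀, Monic, leadingCoeff_mul, leadingCoeff_C,
      inv_mul_cancel₀ hlc]
  have hdeg : ((C c₀ * q).map ψ).natDegree = (q.map ψ).natDegree := by
    rw [Polynomial.map_mul, map_C, hc₀, natDegree_C_mul (inv_ne_zero hlc)]
  obtain ⟨w, hw1, hw2, hw3⟩ := lifts_and_natDegree_eq_and_monic (f := ψ)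
    (p := (C c₀ * q).map ψ) ((mem_lifts _).2 ⟨_, rfl⟩) hmonic
  obtain ⟨e, he⟩ := poly_ker ψ π hker (C c₀ * q - w) (by rw [Polynomial.map_sub, hw1, sub_self])
  obtain ⟨v, w', hv, hw'm, hw'd, hvq⟩ := weierstrass_aux π r hπ r 1 le_rfl (by omega)
    (C c₀ * q) w e hw3 (by rw [pow_one, ← he]; ring)
  obtain ⟨v₁, hv₁⟩ : IsUnit (v * C c₀) := hv.mul (hc₀u.map C)
  have hv₁q : q * v₁ = w' := by rw [hv₁, ← hvq]; ring
  have hk : ∃ i₀ : Fin k, True := by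
    by_contra hno
    push Not at hno
    have : IsEmpty (Fin k) := ⟨fun i => hno i⟩
    apply hd
    rw [hqdef, Matrix.det_isEmpty]; simp
  obtain ⟨i₀, -⟩ := hk
  set Dg : Matrix (Fin k) (Fin k) R[X] := Matrix.diagonal (Function.update 1 i₀ (v₁ : R[X]))
    with hDg
  set Di : Matrix (Fin k) (Fin k) R[X] := Matrix.diagonal
    (Function.update 1 i₀ ((v₁⁻¹ : R[X]ˣ) : R[X])) with hDi
  have hDD : Dg * Di = 1 := by
    rw [hDg, hDi, Matrix.diagonal_mul_diagonal, ← Matrix.diagonal_one]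
    congr 1
    funext i
    by_cases hi : i = i₀
    · subst hi; simp
    · simp [hi]
  have hDgdet : Dg.det = v₁ := by
    rw [hDg, Matrix.det_diagonal, Finset.prod_update_of_mem (Finset.mem_univ _)]
    simp
  have hfac : W * G = (W * Dg) * (Di * G) := by
    rw [Matrix.mul_assoc, ← Matrix.mul_assoc Dg, hDD, Matrix.one_mul]
  have hdet : (W * Dg).det = w' := by rw [Matrix.det_mul, hDgdet, hv₁q]
  have hminor : ∀ c, minorOn (W * G) c = w' * minorOn (Di * G) c := by
    intro c; rw [hfac, minorOn_mul, hdet]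
  have hwpos : 0 < w'.natDegree := by
    rw [hw'd, hw2, hdeg]; omega
  have hfull : FullRowRank (Di * G) := by
    obtain ⟨c, hc⟩ := hG
    refine ⟨c, ?_⟩
    rw [hminor] at hc
    exact (mul_mem_nonZeroDivisors.1 hc).2
  refine ⟨Di * G, hfull, ?_, ?_⟩
  · rw [hfac]
    apply code_eq_of_mul
    rw [hdet, ← hv₁q, mul_coeff_zero]
    refine IsUnit.mul ?_ ?_
    · exact isUnit_of_map_ne_zero ψ π r hsurj hker hπ _ (by rwa [← coeff_map])
    · exact (v₁.isUnit.map (constantCoeff : R[X] →+* R))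
  · have hne : ∃ c, minorOn (Di * G) c ≠ 0 := by
      obtain ⟨c, hc⟩ := hfull
      exact ⟨c, nonZeroDivisors.ne_zero hc⟩
    obtain ⟨c₁, hc₁⟩ := hne
    have hle : ∀ c, (minorOn (W * G) c).degree ≤ intdeg (W * G) := fun c =>
      Finset.le_sup (f := fun c => (minorOn (W * G) c).degree) (Finset.mem_univ c)
    have hlt : ∀ c, minorOn (Di * G) c ≠ 0 →
        (minorOn (Di * G) c).degree < (minorOn (W * G) c).degree := by
      intro c hc
      rw [hminor, hw'm.degree_mul_comm, hw'm.degree_mul,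
        degree_eq_natDegree hc, degree_eq_natDegree hw'm.ne_zero]
      exact_mod_cast Nat.lt_add_of_pos_right hwpos
    have hbot : ⊥ < intdeg (W * G) :=
      lt_of_le_of_lt bot_le (lt_of_lt_of_le (hlt c₁ hc₁) (hle c₁))
    rw [intdeg, Finset.sup_lt_iff hbot]
    intro c _
    by_cases hc : minorOn (Di * G) c = 0
    · rw [hc, degree_zero]; exact hbot
    · exact lt_of_lt_of_le (hlt c hc) (hle c)

end Lift2

section ZModFacts
variable (p r : ℕ) [Fact p.Prime] (hr : r ≠ 0)

lemma zmod_ker (x : ZMod (p ^ r)) (hx : ZMod.castHom (dvd_pow_self p hr) (ZMod p) x = 0) :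
    ∃ y, x = (p : ZMod (p ^ r)) * y := by
  have : NeZero (p ^ r) := ⟨pow_ne_zero _ (Fact.out (p := p.Prime)).ne_zero⟩
  obtain ⟨m, rfl⟩ := ZMod.natCast_zmod_surjective x
  rw [map_natCast, ZMod.natCast_eq_zero_iff] at hx
  obtain ⟨t, rfl⟩ := hx
  exact ⟨t, by push_cast; rfl⟩


lemma zmod_ann (x : ZMod (p ^ r)) (hx : (p : ZMod (p ^ r)) ^ (r - 1) * x = 0) :
    ZMod.castHom (dvd_pow_self p hr) (ZMod p) x = 0 := by
  have hp := (Fact.out (p := p.Prime))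
  have : NeZero (p ^ r) := ⟨pow_ne_zero _ hp.ne_zero⟩
  obtain ⟨m, rfl⟩ := ZMod.natCast_zmod_surjective x
  rw [map_natCast, ZMod.natCast_eq_zero_iff]
  have h1 : ((p ^ (r - 1) * m : ℕ) : ZMod (p ^ r)) = 0 := by push_cast; exact hx
  rw [ZMod.natCast_eq_zero_iff] at h1
  obtain ⟨j, rfl⟩ : ∃ j, r = j + 1 := ⟨r - 1, by omega⟩
  rw [Nat.add_sub_cancel, pow_succ] at h1
  exact Nat.dvd_of_mul_dvd_mul_left (pow_pos hp.pos j) h1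

lemma zmod_pow : (p : ZMod (p ^ r)) ^ r = 0 := by
  have : ((p ^ r : ℕ) : ZMod (p ^ r)) = 0 := ZMod.natCast_self _
  rwa [Nat.cast_pow] at this

end ZModFacts

/-- A free convolutional code over `ℤ/p^r` with RIDM encoder `G` is non-catastrophic
(admits some non-catastrophic polynomial generator matrix) iff the monic GCD of the
maximal minors of the reduction of `G` modulo `p` equals `D^s` for some `s ≥ 0`. -/
theorem noncatastrophic_iff_gcdMinors_pow_X
    (p : ℕ) [Fact p.Prime] (r : ℕ) (hr : r ≠ 0) (k n : ℕ)
    (G : Matrix (Fin k) (Fin n) (Polynomial (ZMod (p ^ r))))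
    (hG : FullRowRank G)
    (hRIDM : ∀ G' : Matrix (Fin k) (Fin n) (Polynomial (ZMod (p ^ r))),
      FullRowRank G' → code G' = code G → intdeg G ≤ intdeg G') :
    (∃ G' : Matrix (Fin k) (Fin n) (Polynomial (ZMod (p ^ r))),
        FullRowRank G' ∧ code G' = code G ∧ NonCatastrophic G')
      ↔ ∃ s : ℕ, gcdMinors (reduceMod p r hr G) = Polynomial.X ^ s := by

  set ψ := ZMod.castHom (dvd_pow_self p hr) (ZMod p) with hψ
  have hsurj : Function.Surjective ψ := ZMod.castHom_surjective _
  have hker : ∀ x, ψ x = 0 → ∃ y, x = (p : ZMod (p ^ r)) * y := zmod_ker p r hr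
  have hann : ∀ a, (p : ZMod (p ^ r)) ^ (r - 1) * a = 0 → ψ a = 0 := zmod_ann p r hr
  have hπ : (p : ZMod (p ^ r)) ^ r = 0 := zmod_pow p r
  have hπ0 : ψ (p : ZMod (p ^ r)) = 0 := by rw [map_natCast, ZMod.natCast_self]
  have hred : ∀ A : Matrix (Fin k) (Fin n) (Polynomial (ZMod (p ^ r))),
      reduceMod p r hr A = A.map (mapRingHom ψ) := fun A => rfl
  have hredm : ∀ (A : Matrix (Fin k) (Fin n) (Polynomial (ZMod (p ^ r)))) c,
      minorOn (reduceMod p r hr A) c = (minorOn A c).map ψ := fun A c => by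
    rw [hred, minorOn_map]; rfl
  have hspan : ∀ (A : Matrix (Fin k) (Fin n) (Polynomial (ZMod (p ^ r)))) (s : ℕ),
      gcdMinors (reduceMod p r hr A) = X ^ s →
      (X ^ s : (ZMod p)[X]) ∈ Ideal.span (Set.range (minorOn (A.map (mapRingHom ψ)))) := by
    intro A s hs
    rw [← hs]
    exact gcd_mem_span _
  constructor
  · rintro ⟨G', hfull', hcode', hnc⟩
    obtain ⟨s', hs'⟩ : ∃ s', gcdMinors (reduceMod p r hr G') = X ^ s' := by
      obtain ⟨c, hc⟩ := fullRank_map ψ _ r hr hker hπ hann G' hfull'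
      have hg0 : gcdMinors (reduceMod p r hr G') ≠ 0 := by
        intro h
        have hdvd : gcdMinors (reduceMod p r hr G') ∣ minorOn (reduceMod p r hr G') c :=
          Finset.gcd_dvd (Finset.mem_univ c)
        rw [h, zero_dvd_iff, hredm] at hdvd
        exact hc hdvd
      obtain ⟨g₀, hg₀, hnd⟩ := exists_eq_pow_rootMultiplicity_mul_and_not_dvd _ hg0 0
      rw [C_0, sub_zero] at hg₀ hnd
      by_cases hu : IsUnit g₀
      · apply gcd_eq_X_pow _ (rootMultiplicity 0 (gcdMinors (reduceMod p r hr G')))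
        change gcdMinors (reduceMod p r hr G') ∣ _
        nth_rewrite 1 [hg₀]
        exact (hu.mul_right_dvd).2 dvd_rfl
      · exfalso
        have hg₀0 : g₀ ≠ 0 := by rintro rfl; exact hnd (dvd_zero _)
        obtain ⟨f, hf, hfg⟩ := WfDvdMonoid.exists_irreducible_factor hu hg₀0
        refine nonCat_irred ψ _ r hr hsurj hker hπ hann G' hnc f hf ?_ ?_
        · intro h0
          exact hnd ((X_dvd_iff.2 h0).trans hfg)
        · intro c
          have hdvd : gcdMinors (reduceMod p r hr G') ∣ minorOn (reduceMod p r hr G') c :=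
            Finset.gcd_dvd (Finset.mem_univ c)
          rw [hg₀] at hdvd
          exact (hfg.trans (dvd_mul_left _ _)).trans hdvd
    have hmem' := hspan G' s' hs'
    have hmem := lift_span ψ _ r hsurj hker hπ G' s' hmem'
    obtain ⟨T, hT⟩ := exists_transition G G' hcode' _ hmem
    set m := s' * r with hm
    have hmin : ∀ c, X ^ (m * k) * minorOn G c = T.det * minorOn G' c := by
      intro c
      rw [← minorOn_mul, ← hT]
      have : minorOn ((X ^ m : (ZMod (p ^ r))[X]) • G) c = X ^ (m * k) * minorOn G c := by
        unfold minorOn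
        have h1 : ((X ^ m : (ZMod (p ^ r))[X]) • G).submatrix id c
            = (X ^ m : (ZMod (p ^ r))[X]) • G.submatrix id c := rfl
        rw [h1, Matrix.det_smul, Fintype.card_fin, ← pow_mul]
      exact this.symm
    have hminF : ∀ c, X ^ (m * k) * (minorOn G c).map ψ = T.det.map ψ * (minorOn G' c).map ψ := by
      intro c
      have := congrArg (Polynomial.map ψ) (hmin c)
      simpa only [Polynomial.map_mul, Polynomial.map_pow, map_X] using this
    have hTdet : T.det.map ψ ≠ 0 := by
      obtain ⟨c, hc⟩ := fullRank_map ψ _ r hr hker hπ hann G hG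
      intro h0
      have := hminF c
      rw [h0, zero_mul] at this
      exact (mul_ne_zero (pow_ne_zero _ X_ne_zero) hc) this
    obtain ⟨W, G'', j, hGW, hW0, hTW⟩ := factor_G ψ _ r hsurj hker hπ0 hπ T hTdet G G' m hT
    have hdeg0 : (W.det.map ψ).natDegree = 0 := by
      by_contra hd
      obtain ⟨G₃, h1, h2, h3⟩ := intdeg_drop ψ _ r hsurj hker hπ W G'' (hGW ▸ hG) hW0 hd
      rw [← hGW] at h2 h3
      exact absurd (hRIDM G₃ h1 h2) (not_le.2 h3)
    have hWu : IsUnit (W.det.map ψ) := by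
      rw [eq_C_of_natDegree_eq_zero hdeg0]
      exact (isUnit_iff_ne_zero.2 hW0).map C
    have hgd : ∀ c, gcdMinors (reduceMod p r hr G) ∣ X ^ j * (minorOn G' c).map ψ := by
      intro c
      have hdvd : gcdMinors (reduceMod p r hr G) ∣ minorOn (reduceMod p r hr G) c :=
        Finset.gcd_dvd (Finset.mem_univ c)
      rw [hredm] at hdvd
      have h1 : gcdMinors (reduceMod p r hr G) ∣
          W.det.map ψ * (X ^ j * (minorOn G' c).map ψ) := by
        rw [← mul_assoc, ← hTW, ← hminF]
        exact hdvd.mul_left _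
      exact (hWu.dvd_mul_left).1 h1
    apply gcd_eq_X_pow _ (j + s')
    change gcdMinors (reduceMod p r hr G) ∣ _
    obtain ⟨a, ha⟩ := Ideal.mem_span_range_iff_exists_fun.1 hmem'
    rw [pow_add, ← ha, Finset.mul_sum]
    refine Finset.dvd_sum fun c _ => ?_
    rw [mul_left_comm]
    refine Dvd.dvd.mul_left ?_ _
    have := hgd c
    rwa [← hredm, hred] at this
  · rintro ⟨s, hs⟩
    exact ⟨G, hG, rfl, nonCatastrophic_of_span G _
      (lift_span ψ _ r hsurj hker hπ G s (hspan G s hs))⟩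
end

section
/- Let K be a field, and let G be a k × n matrix and H an (n−k) × n matrix over K, both of full row rank, satisfying G·Hᵀ = 0. Then there exists a nonzero scalar c ∈ K such that for every subset S of the column indices with |S| = k, the k × k minor of G on the columns S equals (−1)^{σ(S)} · c times the (n−k) × (n−k) minor of H on the complementary columns, where σ(S) denotes the sum of the indices in S. -/
open Polynomial Matrix

open Finset in
theorem cm_sign {k m : ℕ} (S : Finset (Fin (k + m))) (hS : S.card = k) (hc : Sᶜ.card = m) :
    ((Equiv.Perm.sign (finSumFinEquiv.symm.trans (finSumEquivOfFinset hS hc)) : ℤˣ) : ℤ) =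
      (-1) ^ (∑ i ∈ S, (i : ℕ)) * (-1) ^ (∑ a : Fin k, (a : ℕ)) := by
  have hcount : ∀ a : Fin k,
      (a : ℕ) + (univ.filter fun b : Fin m => Sᶜ.orderEmbOfFin hc b < S.orderEmbOfFin hS a).card
        = (S.orderEmbOfFin hS a : ℕ) := by
    intro a
    have h1 : (univ.filter fun t : Fin (k + m) => t < S.orderEmbOfFin hS a).card
        = (S.orderEmbOfFin hS a : ℕ) := by
      rw [Finset.filter_gt_eq_Iio, Fin.card_Iio]
    have h2 : (univ.filter fun t : Fin k => t < a).card = (a : ℕ) := by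
      rw [Finset.filter_gt_eq_Iio, Fin.card_Iio]
    rw [← h1]
    nth_rw 1 [← h2]
    rw [card_filter, card_filter, card_filter, ← (finSumEquivOfFinset hS hc).sum_comp,
      Fintype.sum_sum_type]
    simp only [finSumEquivOfFinset_inl, finSumEquivOfFinset_inr, OrderEmbedding.lt_iff_lt]
    congr!
  rw [Equiv.Perm.sign_eq_prod_prod_Ioi]
  have hI : ∀ i : Fin (k + m), Ioi i = univ.filter (fun j => i < j) := by
    intro i; ext; simp
  simp_rw [hI, prod_filter]
  rw [Fin.prod_univ_add]
  simp_rw [Fin.prod_univ_add]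
  have e1 : ∀ a b : Fin k, (Fin.castAdd m a < Fin.castAdd m b) ↔ a < b := by
    intro a b; rw [Fin.lt_def, Fin.lt_def]; simp
  have e2 : ∀ (a : Fin k) (b : Fin m), (Fin.castAdd m a < Fin.natAdd k b) := by
    intro a b; simp [Fin.lt_def]; omega
  have e3 : ∀ (a : Fin k) (b : Fin m), ¬ (Fin.natAdd k b < Fin.castAdd m a) := by
    intro a b; simp [Fin.lt_def]; omega
  have e4 : ∀ a b : Fin m, (Fin.natAdd k a < Fin.natAdd k b) ↔ a < b := by
    intro a b; rw [Fin.lt_def, Fin.lt_def]; simp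
  simp only [e1, e2, e3, e4, Equiv.trans_apply, finSumFinEquiv_symm_apply_castAdd,
    finSumFinEquiv_symm_apply_natAdd, finSumEquivOfFinset_inl, finSumEquivOfFinset_inr,
    OrderEmbedding.lt_iff_lt, if_true, if_false]
  have t : ∀ p : Prop, ∀ [Decidable p], (if p then (if p then (1 : ℤˣ) else -1) else 1) = 1 := by
    intro p _; split_ifs <;> rfl
  simp only [t, prod_const_one, one_mul, mul_one]
  have hs : ∑ i ∈ S, (i : ℕ) = ∑ a : Fin k, (S.orderEmbOfFin hS a : ℕ) := by
    conv_lhs => rw [← map_orderEmbOfFin_univ S hS]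
    rw [sum_map]; rfl
  rw [hs, ← prod_pow_eq_pow_sum, ← prod_pow_eq_pow_sum, ← prod_mul_distrib]
  push_cast
  refine prod_congr rfl fun a _ => ?_
  rw [← hcount a, card_filter, pow_add, mul_right_comm, ← mul_pow]
  norm_num
  rw [card_filter, ← prod_pow_eq_pow_sum]
  refine prod_congr rfl fun b _ => ?_
  have hne : S.orderEmbOfFin hS a ≠ Sᶜ.orderEmbOfFin hc b := by
    intro h
    have h1 := S.orderEmbOfFin_mem hS a
    have h2 := Sᶜ.orderEmbOfFin_mem hc b
    rw [← h] at h2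
    exact (mem_compl.1 h2) h1
  rcases lt_or_gt_of_ne hne with h | h
  · simp [h, h.not_gt]
  · simp [h, h.not_gt]

open scoped Matrix in
theorem cm_general {K : Type*} [Field K] (k m n : ℕ) (hn : k + m = n)
    (G : Matrix (Fin k) (Fin n) K) (H : Matrix (Fin m) (Fin n) K)
    (hG : LinearIndependent K G) (hH : LinearIndependent K H)
    (hGH : G * H.transpose = 0) :
    ∃ c : K, c ≠ 0 ∧ ∀ (S : Finset (Fin n)) (hS : S.card = k) (hc : Sᶜ.card = m),
      (G.submatrix id (S.orderEmbOfFin hS)).det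
        = (-1) ^ (∑ i ∈ S, (i : ℕ)) * c * (H.submatrix id (Sᶜ.orderEmbOfFin hc)).det := by
  subst hn
  -- a right inverse of `H`
  obtain ⟨B, hB⟩ : ∃ B : Matrix (Fin (k + m)) (Fin m) K, H * B = 1 := by
    rw [← Matrix.mulVec_surjective_iff_exists_right_inverse]
    have hr : H.rank = m := by
      simpa using LinearIndependent.rank_matrix (M := H) hH
    have : LinearMap.range H.mulVecLin = ⊤ := by
      apply Submodule.eq_top_of_finrank_eq
      rw [← Matrix.rank, hr]; simp
    exact LinearMap.range_eq_top.1 this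
  have hB' : Bᵀ * Hᵀ = 1 := by rw [← Matrix.transpose_mul, hB, Matrix.transpose_one]
  let M : Matrix (Fin k ⊕ Fin m) (Fin (k + m)) K := Matrix.fromRows G Bᵀ
  let M0 : Matrix (Fin k ⊕ Fin m) (Fin k ⊕ Fin m) K := M.submatrix id finSumFinEquiv
  have hM0 : M0.det ≠ 0 := by
    have hu : IsUnit M0 := by
      rw [← Matrix.vecMul_injective_iff_isUnit]
      refine (injective_iff_map_eq_zero M0.vecMulLinear).2 ?_
      intro v hv
      have hv1 : v ᵥ* M = 0 := by
        funext j
        have := congrFun hv (finSumFinEquiv.symm j)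
        simpa [M0, Matrix.vecMul, dotProduct, Matrix.submatrix_apply] using this
      obtain ⟨x, y, rfl⟩ : ∃ x y, v = Sum.elim x y := ⟨_, _, (Sum.elim_comp_inl_inr v).symm⟩
      rw [Matrix.sumElim_vecMul_fromRows] at hv1
      have hy : y = 0 := by
        have := congrArg (fun w => w ᵥ* Hᵀ) hv1
        simpa [Matrix.add_vecMul, Matrix.vecMul_vecMul, hGH, hB'] using this
      subst hy
      have hx : x = 0 := by
        apply Matrix.vecMul_injective_iff.2 hG
        simpa using hv1
      subst hx
      funext i; cases i <;> rfl
    exact ((Matrix.isUnit_iff_isUnit_det _).1 hu).ne_zero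
  refine ⟨(-1) ^ (∑ a : Fin k, (a : ℕ)) * M0.det, mul_ne_zero (pow_ne_zero _ (by simp)) hM0, ?_⟩
  intro S hS hc
  set e := finSumEquivOfFinset hS hc with he
  have hsign : (M.submatrix id e).det
      = (-1) ^ (∑ i ∈ S, (i : ℕ)) * ((-1) ^ (∑ a : Fin k, (a : ℕ)) * M0.det) := by
    have h1 : M.submatrix id e = M0.submatrix id (e.trans finSumFinEquiv.symm) := by
      ext i j; simp [M0]
    have h2 : Equiv.Perm.sign (e.trans finSumFinEquiv.symm)
        = Equiv.Perm.sign (finSumFinEquiv.symm.trans e) := by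
      rw [← Equiv.Perm.sign_symm_trans_trans (e.trans finSumFinEquiv.symm) finSumFinEquiv]
      congr 1
      ext j; simp
    rw [h1, Matrix.det_permute', h2, cm_sign S hS hc]
    push_cast
    ring
  have hprod : M.submatrix id e *
      Matrix.fromBlocks 1 (H.submatrix id (S.orderEmbOfFin hS))ᵀ 0
        (H.submatrix id (Sᶜ.orderEmbOfFin hc))ᵀ
      = Matrix.fromBlocks (G.submatrix id (S.orderEmbOfFin hS)) 0
        (Bᵀ.submatrix id (S.orderEmbOfFin hS)) 1 := by
    have hM : M.submatrix id e = Matrix.fromBlocks (G.submatrix id (S.orderEmbOfFin hS))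
        (G.submatrix id (Sᶜ.orderEmbOfFin hc)) (Bᵀ.submatrix id (S.orderEmbOfFin hS))
        (Bᵀ.submatrix id (Sᶜ.orderEmbOfFin hc)) := by
      ext i j
      rcases i with i | i <;> rcases j with j | j <;> simp [M, he]
    have hsplit : ∀ {l : ℕ} (A : Matrix (Fin l) (Fin (k + m)) K),
        A.submatrix id (S.orderEmbOfFin hS) * (H.submatrix id (S.orderEmbOfFin hS))ᵀ
        + A.submatrix id (Sᶜ.orderEmbOfFin hc) * (H.submatrix id (Sᶜ.orderEmbOfFin hc))ᵀ
        = A * Hᵀ := by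
      intro l A
      ext i j
      rw [Matrix.mul_apply, ← e.sum_comp, Fintype.sum_sum_type]
      simp [Matrix.mul_apply, he]
    rw [hM, Matrix.fromBlocks_multiply, hsplit, hsplit, hGH, hB']
    simp
  have hd := congrArg Matrix.det hprod
  rw [Matrix.det_mul, Matrix.det_fromBlocks_zero₂₁, Matrix.det_fromBlocks_zero₁₂, hsign,
    Matrix.det_transpose] at hd
  simp only [Matrix.det_one, one_mul, mul_one] at hd
  exact hd.symm

/-- Minors of orthogonal full-row-rank matrices over a field: if `G·Hᵀ = 0` then each
`k × k` minor of `G` equals, up to a fixed nonzero scalar and the sign `(-1)^{σ(S)}`,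
the complementary `(n-k) × (n-k)` minor of `H`. -/
theorem complementary_minors_of_orthogonal
    {K : Type*} [Field K] (k n : ℕ) (hk : k ≤ n)
    (G : Matrix (Fin k) (Fin n) K) (H : Matrix (Fin (n - k)) (Fin n) K)
    (hG : LinearIndependent K G) (hH : LinearIndependent K H)
    (hGH : G * H.transpose = 0) :
    ∃ c : K, c ≠ 0 ∧ ∀ (S : Finset (Fin n)) (hS : S.card = k),
      (G.submatrix id (S.orderEmbOfFin hS)).det
        = (-1) ^ (∑ i ∈ S, (i : ℕ)) * c *
            (H.submatrix id (Sᶜ.orderEmbOfFin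
              (by rw [Finset.card_compl, hS, Fintype.card_fin]))).det := by
  obtain ⟨c, hc, h⟩ := cm_general k (n - k) n (by omega) G H hG hH hGH
  exact ⟨c, hc, fun S hS => h S hS _⟩
end
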